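/- arXiv:2507.11048 — 4 statements merged into one kernel-verified Lean document; each statement's English description precedes it below -/
import Mathlib

section
/- Let f be a homeomorphism of a compact metric space M and let μ be an ergodic f-invariant Borel probability measure. For every κ > 0 there exists ε > 0 such that for every weak* neighborhood 𝒰 of μ in the space of Borel probability measures there exists N > 0 such that for every n > N there is an (n, ε)-separated set Γ_n ⊆ supp(μ) satisfying: (1) the empirical measure ℰ_n(x) lies in 𝒰 for every x ∈ Γ_n; (2) if h_μ(f) < ∞, then |(1/n) log(#Γ_n) − h_μ(f)| < κ; (3) if h_μ(f) = ∞, then (1/n) log(#Γ_n) > 1/κ. -/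
/-!
The proof is a Katok-type entropy argument.

Only a lower bound on cardinalities has to be produced: a subset of a separated set is separated, so
a set with at least `exp (n c)` elements can be trimmed to exactly `⌈exp (n c)⌉` elements. For a
rate `c` below the entropy there is a finite partition `P` whose entropy `h` exceeds `c`, and
`exists_large_sep` produces the sets from `P`.

Entropy of itineraries is subadditive (`ent_subadditive`), so by Fekete's lemma the itineraries of
length `n` have entropy at least `n h` for every `n ≠ 0` (`limsup_ent_le`). Up to small measure the
atoms of `P` are uniformly separated compact sets (`exists_separated_core`); let `K` be their union
and `ε` the separation scale, so that `ε`-close points of `K` have the same symbol. By the mean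
ergodic theorem (`birkhoffAverage_tendstoInMeasure`), for large `n` the set `G` of points of the
support whose empirical measure lies in `U` and whose orbit leaves `K` with frequency less than `δ`
has measure close to one.

A maximal `(n, ε)`-separated subset `Γ` of `G` is an `(n, ε)`-net of `G`, so the itinerary of each
point of `G` is within Hamming distance `2 δ n` of that of a point of `Γ`. Gibbs' inequality against
a distribution concentrated near the itineraries of `Γ` bounds the entropy of itineraries by
`log #Γ` plus a small multiple of `n` (`ent_le_log_card`). Comparing with the lower bound `n h`
gives `#Γ ≥ exp (n c)`.
-/

open Filter MeasureTheory Set Topology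
open scoped ENNReal NNReal

attribute [local instance] PiCountable.metricSpace

namespace EF

/-! ### Topological entropy via separated sets -/

section Entropy

variable {M : Type*} [MetricSpace M]

/-- `Q` is an `(n,ε)`-separated set for `f`. -/
def IsDynSep (f : M → M) (n : ℕ) (ε : ℝ) (Q : Set M) : Prop :=
  Q.Pairwise fun x y => ∃ j : ℕ, j ≤ n ∧ ε < dist (f^[j] x) (f^[j] y)

/-- Maximal cardinality of an `(n,ε)`-separated subset of `K`. -/
noncomputable def sepCount (f : M → M) (K : Set M) (n : ℕ) (ε : ℝ) : ℕ :=
  sSup {k : ℕ | ∃ Q : Finset M, ↑Q ⊆ K ∧ IsDynSep f n ε ↑Q ∧ Q.card = k}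

/-- Topological entropy of `f` on the (not necessarily invariant) set `K`. -/
noncomputable def topEntropyOn (f : M → M) (K : Set M) : EReal :=
  ⨆ (ε : ℝ) (_ : 0 < ε),
    Filter.atTop.limsup fun n : ℕ => ((Real.log (sepCount f K n ε) / n : ℝ) : EReal)

/-- Topological entropy of `f`. -/
noncomputable def topEntropy (f : M → M) : EReal :=
  topEntropyOn f Set.univ

end Entropy

/-! ### Measure-theoretic (Kolmogorov–Sinai) entropy -/

section MeasEntropy

variable {α : Type*} [MeasurableSpace α]

/-- A finite measurable partition of the whole space. -/
def IsMeasPartition (P : Finset (Set α)) : Prop :=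
  (∀ p ∈ P, MeasurableSet p) ∧ ⋃₀ (↑P : Set (Set α)) = Set.univ ∧
    (↑P : Set (Set α)).Pairwise Disjoint

/-- The function `x ↦ - x log x`. -/
noncomputable def negMulLog (x : ℝ) : ℝ := -(x * Real.log x)

/-- Information of the refinement `P ∨ f⁻¹ P ∨ ⋯ ∨ f⁻⁽ⁿ⁻¹⁾ P` with respect to `μ`. -/
noncomputable def refinedInfo (f : α → α) (μ : Measure α) (P : Finset (Set α)) (n : ℕ) : ℝ :=
  ∑ a : Fin n → {p // p ∈ P},
    negMulLog (μ (⋂ i : Fin n, f^[(i : ℕ)] ⁻¹' ((a i : Set α)))).toReal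

/-- Entropy of `f` w.r.t. `μ` and the partition `P`. -/
noncomputable def partEntropy (f : α → α) (μ : Measure α) (P : Finset (Set α)) : ℝ :=
  Filter.atTop.limsup fun n : ℕ => refinedInfo f μ P n / n

/-- Kolmogorov–Sinai entropy of `f` with respect to `μ`. -/
noncomputable def measEntropy (f : α → α) (μ : Measure α) : EReal :=
  ⨆ (P : Finset (Set α)) (_ : IsMeasPartition P), ((partEntropy f μ P : ℝ) : EReal)

end MeasEntropy

/-! ### Discrete-time dynamics -/

section Discrete

variable {M : Type*} [MetricSpace M]

/-- A set invariant under `f`. -/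
def InvSet (f : M → M) (Λ : Set M) : Prop := f '' Λ = Λ

/-- `f` is minimal on the invariant set `Λ`. -/
def MinimalOn (f : M → M) (Λ : Set M) : Prop :=
  ∀ K : Set M, K ⊆ Λ → K.Nonempty → IsClosed K → f '' K = K → K = Λ

variable [MeasurableSpace M]

/-- `f` is uniquely ergodic on `Λ`: there is exactly one invariant Borel probability
measure supported in `Λ`. -/
def UniquelyErgodicOn (f : M → M) (Λ : Set M) : Prop :=
  ∃! μ : Measure M, IsProbabilityMeasure μ ∧ MeasurePreserving f μ μ ∧ μ Λᶜ = 0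

/-- `f` is strictly ergodic on `Λ`: minimal and uniquely ergodic. -/
def StrictlyErgodicOn (f : M → M) (Λ : Set M) : Prop :=
  MinimalOn f Λ ∧ UniquelyErgodicOn f Λ

/-- Entropy flexibility of `f` on an invariant set `S`. -/
def EntropyFlexibleOn (f : M → M) (S : Set M) : Prop :=
  ∀ c : ℝ, 0 ≤ c → (c : EReal) < topEntropyOn f S →
    ∃ (μ : Measure M) (Λ : Set M), IsProbabilityMeasure μ ∧ Ergodic f μ ∧ μ Sᶜ = 0 ∧
      Λ ⊆ S ∧ IsCompact Λ ∧ f '' Λ = Λ ∧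
      topEntropyOn f Λ = (c : EReal) ∧ measEntropy f μ = (c : EReal)

/-- Entropy flexibility of `f` (on the whole space). -/
def EntropyFlexible (f : M → M) : Prop :=
  ∀ c : ℝ, 0 ≤ c → (c : EReal) < topEntropy f →
    ∃ (μ : Measure M) (Λ : Set M), IsProbabilityMeasure μ ∧ Ergodic f μ ∧
      IsCompact Λ ∧ f '' Λ = Λ ∧
      topEntropyOn f Λ = (c : EReal) ∧ measEntropy f μ = (c : EReal)

end Discrete

/-! ### Shadowing and expansiveness (discrete time) -/

section Shadowing

variable {M : Type*} [MetricSpace M]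

/-- The shadowing property for a homeomorphism `f` (full orbits indexed by `ℤ`,
encoded via orbit functions `z` with `z (n+1) = f (z n)`). -/
def ShadowingProperty (f : M → M) : Prop :=
  ∀ ε : ℝ, 0 < ε → ∃ δ : ℝ, 0 < δ ∧ ∀ x : ℤ → M,
    (∀ n : ℤ, dist (f (x n)) (x (n + 1)) ≤ δ) →
    ∃ z : ℤ → M, (∀ n : ℤ, z (n + 1) = f (z n)) ∧ ∀ n : ℤ, dist (z n) (x n) ≤ ε

/-- The shadowing property relative to an invariant set `Λ`. -/
def ShadowingOn (f : M → M) (Λ : Set M) : Prop :=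
  ∀ ε : ℝ, 0 < ε → ∃ δ : ℝ, 0 < δ ∧ ∀ x : ℤ → M, (∀ n : ℤ, x n ∈ Λ) →
    (∀ n : ℤ, dist (f (x n)) (x (n + 1)) ≤ δ) →
    ∃ z : ℤ → M, (∀ n : ℤ, z n ∈ Λ) ∧ (∀ n : ℤ, z (n + 1) = f (z n)) ∧
      ∀ n : ℤ, dist (z n) (x n) ≤ ε

/-- Expansiveness of a homeomorphism, phrased via full orbit functions. -/
def Expansive (f : M → M) : Prop :=
  ∃ e : ℝ, 0 < e ∧ ∀ z w : ℤ → M,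
    (∀ n : ℤ, z (n + 1) = f (z n)) → (∀ n : ℤ, w (n + 1) = f (w n)) →
    (∀ n : ℤ, dist (z n) (w n) ≤ e) → z 0 = w 0

/-- Topological transitivity of `f` on `Λ`. -/
def TransitiveOn (f : M → M) (Λ : Set M) : Prop :=
  ∀ U V : Set M, IsOpen U → IsOpen V → (U ∩ Λ).Nonempty → (V ∩ Λ).Nonempty →
    ∃ n : ℕ, 0 < n ∧ ((f^[n] '' (U ∩ Λ)) ∩ V).Nonempty

end Shadowing

/-! ### Continuous-time dynamics -/

section Flows

variable {M : Type*} [MetricSpace M]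

/-- A set invariant under all time-`t` maps of the flow. -/
def FlowInvSet (φ : Flow ℝ M) (Λ : Set M) : Prop := ∀ t : ℝ, φ.toFun t '' Λ = Λ

/-- Topological entropy of a flow on a set: entropy of its time-one map. -/
noncomputable def flowTopEntropyOn (φ : Flow ℝ M) (K : Set M) : EReal :=
  topEntropyOn (φ.toFun 1) K

/-- Topological entropy of a flow: the entropy of its time-one map. -/
noncomputable def flowTopEntropy (φ : Flow ℝ M) : EReal := topEntropy (φ.toFun 1)

/-- Minimality of a flow on `Λ`. -/
def FlowMinimalOn (φ : Flow ℝ M) (Λ : Set M) : Prop :=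
  ∀ K : Set M, K ⊆ Λ → K.Nonempty → IsClosed K → (∀ t : ℝ, φ.toFun t '' K = K) → K = Λ

variable [MeasurableSpace M]

/-- An invariant measure for a flow. -/
def FlowInvariant (φ : Flow ℝ M) (μ : Measure M) : Prop :=
  ∀ t : ℝ, MeasurePreserving (φ.toFun t) μ μ

/-- An ergodic measure for a flow. -/
def FlowErgodic (φ : Flow ℝ M) (μ : Measure M) : Prop :=
  FlowInvariant φ μ ∧
    ∀ s : Set M, MeasurableSet s → (∀ t : ℝ, φ.toFun t ⁻¹' s = s) → μ s = 0 ∨ μ s = 1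

/-- Measure-theoretic entropy of a flow: entropy of the time-one map. -/
noncomputable def flowMeasEntropy (φ : Flow ℝ M) (μ : Measure M) : EReal :=
  measEntropy (φ.toFun 1) μ

/-- Unique ergodicity of a flow on `Λ`. -/
def FlowUniquelyErgodicOn (φ : Flow ℝ M) (Λ : Set M) : Prop :=
  ∃! μ : Measure M, IsProbabilityMeasure μ ∧ FlowInvariant φ μ ∧ μ Λᶜ = 0

/-- Strict ergodicity of a flow on `Λ`. -/
def FlowStrictlyErgodicOn (φ : Flow ℝ M) (Λ : Set M) : Prop :=
  FlowMinimalOn φ Λ ∧ FlowUniquelyErgodicOn φ Λ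

/-- Entropy flexibility for flows. -/
def FlowEntropyFlexible (φ : Flow ℝ M) : Prop :=
  ∀ c : ℝ, 0 ≤ c → (c : EReal) < flowTopEntropy φ →
    ∃ (μ : Measure M) (Λ : Set M), IsProbabilityMeasure μ ∧ FlowErgodic φ μ ∧
      IsCompact Λ ∧ FlowInvSet φ Λ ∧
      flowTopEntropyOn φ Λ = (c : EReal) ∧ flowMeasEntropy φ μ = (c : EReal)

end Flows

/-! ### Suspension flows -/

section Suspension

variable {X : Type*} [MetricSpace X] {Λ : Type*} [MetricSpace Λ]

/-- `φ` (a flow on `Λ`) is, on the subset `Γ ⊆ Λ`, the suspension flow of the base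
map `f` restricted to `S ⊆ X` under the roof function `ρ`, witnessed by the
embedding `e : X → Λ` of the base. This characterizes the quotient of `S × ℝ` by
`(x, ρ x) ∼ (f x, 0)` with the unit-speed vertical flow. -/
def IsSuspensionOn (f : X → X) (S : Set X) (ρ : X → ℝ) (φ : Flow ℝ Λ) (Γ : Set Λ) : Prop :=
  ∃ e : X → Λ, ContinuousOn e S ∧ (∀ x ∈ S, e x ∈ Γ) ∧
    (∀ x ∈ S, φ.toFun (ρ x) (e x) = e (f x)) ∧
    (∀ z ∈ Γ, ∃ x ∈ S, ∃ s : ℝ, 0 ≤ s ∧ s < ρ x ∧ φ.toFun s (e x) = z) ∧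
    (∀ x ∈ S, ∀ y ∈ S, ∀ s u : ℝ, 0 ≤ s → s < ρ x → 0 ≤ u → u < ρ y →
      φ.toFun s (e x) = φ.toFun u (e y) → x = y ∧ s = u)

end Suspension

/-! ### Symbolic dynamics -/

section Symbolic

/-- The full shift map on `ℤ → A`. -/
def fullShift (A : Type*) : (ℤ → A) → (ℤ → A) := fun x i => x (i + 1)

variable {A : Type*} [MetricSpace A]

/-- A subshift: a closed shift-invariant subset of the full shift. -/
def IsSubshift (S : Set (ℤ → A)) : Prop :=
  IsClosed S ∧ fullShift A '' S = S

/-- The vertex shift determined by a transition relation `Adj`. -/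
def vertexShift {B : Type*} (Adj : B → B → Prop) : Set (ℤ → B) :=
  {x | ∀ i : ℤ, Adj (x i) (x (i + 1))}

/-- A topological conjugacy between two shift spaces (over possibly different
alphabets): a homeomorphism of the subspaces intertwining the shift maps. -/
def ShiftConj {B : Type*} [mB : MetricSpace B] (S : Set (ℤ → A)) (T : Set (ℤ → B)) : Prop :=
  ∃ h : ↥S ≃ₜ ↥T, ∀ x y : ↥S, (y : ℤ → A) = fullShift A (x : ℤ → A) →
    ((h y : ℤ → B)) = fullShift B ((h x : ℤ → B))

/-- A subshift of finite type: a subshift topologically conjugate to a vertex shift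
over some finite alphabet. -/
def IsSFT [Fintype A] (S : Set (ℤ → A)) : Prop :=
  IsSubshift S ∧ ∃ (B : Type) (_ : Fintype B) (mB : MetricSpace B) (Adj : B → B → Prop),
    @ShiftConj A _ B mB S (vertexShift Adj)

/-- The word `w` occurs in some point of `S`. -/
def occursIn (w : List A) (S : Set (ℤ → A)) : Prop :=
  ∃ x ∈ S, ∃ a : ℤ, ∀ i : Fin w.length, x (a + (i : ℕ)) = w.get i

/-- The words of length `s` in the language of `S`. -/
def langOf (s : ℕ) (S : Set (ℤ → A)) : Set (List A) :=
  {w | w.length = s ∧ occursIn w S}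

/-- `r` is a parsing of `x` into words from `𝒲`. -/
def ParsesAt (x : ℤ → A) (𝒲 : Finset (List A)) (r : ℤ → ℤ) : Prop :=
  ∀ j : ℤ, ∃ w ∈ 𝒲, r (j + 1) = r j + w.length ∧
    ∀ i : Fin w.length, x (r j + (i : ℕ)) = w.get i

/-- The renewal system over a finite set of words `𝒲`: all bi-infinite free
concatenations of words from `𝒲`. -/
def renewalSet (𝒲 : Finset (List A)) : Set (ℤ → A) :=
  {x | ∃ r : ℤ → ℤ, ParsesAt x 𝒲 r}

end Symbolic

/-! ### Horseshoes for flows -/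

section Horseshoe

variable {M : Type*} [MetricSpace M]

/-- Auxiliary: `Λ` is a horseshoe of `φ` with symbol space `B`. -/
def HorseshoeWitness (φ : Flow ℝ M) (Λ : Set M) (B : Type) [Fintype B] [MetricSpace B] : Prop :=
  2 ≤ Fintype.card B ∧ ∃ ρ : (ℤ → B) → ℝ, Continuous ρ ∧ (∀ x, 0 < ρ x) ∧
    IsSuspensionOn (fullShift B) Set.univ ρ φ Λ

/-- A horseshoe of a flow: a compact invariant set on which the flow is conjugate to
a suspension flow over a full shift on at least two symbols. -/
def IsHorseshoe (φ : Flow ℝ M) (Λ : Set M) : Prop :=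
  ∃ (B : Type) (iB : Fintype B) (mB : MetricSpace B), @HorseshoeWitness M _ φ Λ B iB mB

end Horseshoe

/-! ### The metric on measures and empirical measures -/

section MeasMetric

variable {M : Type*} [MetricSpace M] [MeasurableSpace M]

/-- The metric `𝔡` on Borel (probability) measures determined by a sequence of test
functions `Φ`. -/
noncomputable def measDist (Φ : ℕ → M → ℝ) (μ ν : Measure M) : ℝ :=
  ∑' n : ℕ, (1 / 2 : ℝ) ^ (n + 1) * |(∫ x, Φ n x ∂μ) - ∫ x, Φ n x ∂ν|

/-- A sequence of test functions with `‖Φ n‖_∞ + Lip (Φ n) ≤ 1`, dense in `C(M,ℝ)`. -/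
def GoodTestSeq (Φ : ℕ → M → ℝ) : Prop :=
  (∀ n : ℕ, ∃ C K : ℝ, 0 ≤ C ∧ 0 ≤ K ∧ C + K ≤ 1 ∧ (∀ x, |Φ n x| ≤ C) ∧
    ∀ x y, |Φ n x - Φ n y| ≤ K * dist x y) ∧
  ∀ g : M → ℝ, Continuous g → ∀ ε : ℝ, 0 < ε → ∃ n : ℕ, ∀ x, |g x - Φ n x| < ε

/-- The `n`-th empirical measure of the point `x` for the map `f`. -/
noncomputable def empMeasure (f : M → M) (n : ℕ) (x : M) : Measure M :=
  (n : ℝ≥0∞)⁻¹ • ∑ j ∈ Finset.range n, Measure.dirac (f^[j] x)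

/-- The topological support of a measure. -/
def measSupport (μ : Measure M) : Set M :=
  {x | ∀ U : Set M, IsOpen U → x ∈ U → 0 < μ U}

/-- A measure of maximal entropy of `f` on `Λ`. -/
def IsMaxEntropyMeasureOn (f : M → M) (Λ : Set M) (μ : Measure M) : Prop :=
  IsProbabilityMeasure μ ∧ MeasurePreserving f μ μ ∧ μ Λᶜ = 0 ∧
    measEntropy f μ = topEntropyOn f Λ

end MeasMetric

/-! ### Flow shadowing and expansiveness -/

section FlowShadow

variable {M : Type*} [MetricSpace M]

/-- Bowen–Walters expansiveness for flows. -/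
def FlowExpansive (φ : Flow ℝ M) : Prop :=
  ∀ ε : ℝ, 0 < ε → ∃ δ : ℝ, 0 < δ ∧ ∀ x y : M, ∀ s : ℝ → ℝ, Continuous s → s 0 = 0 →
    (∀ t : ℝ, dist (φ.toFun t x) (φ.toFun (s t) y) ≤ δ) →
    ∃ τ : ℝ, |τ| ≤ ε ∧ y = φ.toFun τ x

/-- The shadowing property for flows: every `(δ,1)`-pseudo-orbit is `ε`-traced,
up to an orientation preserving reparametrization of time, by a true orbit. -/
def FlowShadowing (φ : Flow ℝ M) : Prop :=
  ∀ ε : ℝ, 0 < ε → ∃ δ : ℝ, 0 < δ ∧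
    ∀ (x : ℤ → M) (T S : ℤ → ℝ), (∀ i : ℤ, 1 ≤ T i) →
      (∀ i : ℤ, dist (φ.toFun (T i) (x i)) (x (i + 1)) ≤ δ) →
      S 0 = 0 → (∀ i : ℤ, S (i + 1) = S i + T i) →
      ∃ (z : M) (h : ℝ → ℝ), StrictMono h ∧ Continuous h ∧ Function.Surjective h ∧
        ∀ i : ℤ, ∀ t : ℝ, S i ≤ t → t < S (i + 1) →
          dist (φ.toFun (h t) z) (φ.toFun (t - S i) (x i)) ≤ ε

end FlowShadow


/-! ### Lift of a measure to a suspension flow -/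

section Lift

variable {X : Type*} [MeasurableSpace X] {Y : Type*} [TopologicalSpace Y] [MeasurableSpace Y]

/-- The lift of a base measure `ν` to the suspension flow `φ` with roof `ρ`,
via the base embedding `e`: the normalized image of `ν ⊗ Leb` on the region
below the roof. -/
noncomputable def suspLift (φ : Flow ℝ Y) (e : X → Y) (ρ : X → ℝ) (ν : Measure X) :
    Measure Y :=
  (ENNReal.ofReal (∫ x, ρ x ∂ν))⁻¹ •
    Measure.map (fun p : X × ℝ => φ.toFun p.2 (e p.1))
      ((ν.prod (volume : Measure ℝ)).restrict {p : X × ℝ | 0 ≤ p.2 ∧ p.2 < ρ p.1})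

end Lift


end EF
open EF MeasureTheory Filter Topology

namespace KatokSep

/-! ### Mean ergodic theorem and convergence in probability -/

section MeanErgodic

variable {M : Type*} [MeasurableSpace M]

/-- Birkhoff averages of an ergodic map converge in measure to the space average; obtained from
von Neumann's mean ergodic theorem in `L²`. -/
lemma birkhoffAverage_tendstoInMeasure {f : M → M} {μ : Measure M} [IsProbabilityMeasure μ]
    (herg : Ergodic f μ) {g : M → ℝ} (hg : MemLp g 2 μ) :
    TendstoInMeasure μ (fun n => birkhoffAverage ℝ f g n) atTop (fun _ => ∫ x, g x ∂μ) := by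
  have hf : MeasurePreserving f μ μ := herg.toMeasurePreserving
  set T : Lp ℝ 2 μ →L[ℝ] Lp ℝ 2 μ :=
    (Lp.compMeasurePreservingₗᵢ ℝ f hf).toContinuousLinearMap with hT
  have hTapp : ∀ u, T u = Lp.compMeasurePreserving f hf u := fun u => rfl
  set G : Lp ℝ 2 μ := hg.toLp g with hG
  have hlim := T.tendsto_birkhoffAverage_orthogonalProjection
    (LinearIsometry.norm_toContinuousLinearMap_le _) G
  set E := T.eqLocus (1 : Lp ℝ 2 μ →L[ℝ] Lp ℝ 2 μ) with hE
  set Gb : Lp ℝ 2 μ := (E.orthogonalProjectionOnto G : Lp ℝ 2 μ) with hGb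
  have hfix : T Gb = Gb := (E.orthogonalProjectionOnto G).2
  -- the limit is invariant, hence constant by ergodicity
  obtain ⟨c, hc⟩ : ∃ c, (Gb : M → ℝ) =ᵐ[μ] Function.const M c := by
    refine herg.ae_eq_const_of_ae_eq_comp_ae (Lp.aestronglyMeasurable Gb) ?_
    have h1 := Lp.coeFn_compMeasurePreserving Gb hf
    rw [← hTapp, hfix] at h1
    exact h1.symm
  -- the constant is found by pairing with the invariant function `1`
  have hcval : c = ∫ x, g x ∂μ := by
    set one : Lp ℝ 2 μ := indicatorConstLp 2 MeasurableSet.univ (measure_ne_top μ _) (1 : ℝ)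
    have h1 : one ∈ E := by
      change T one = one
      rw [hTapp, Lp.indicatorConstLp_compMeasurePreserving]
      rfl
    have h2 := Submodule.inner_orthogonalProjectionOnto_eq_of_mem_left (K := E) ⟨one, h1⟩ G
    have h3 : inner ℝ one Gb = inner ℝ one G := h2
    rw [L2.inner_indicatorConstLp_one, L2.inner_indicatorConstLp_one] at h3
    simp only [Measure.restrict_univ] at h3
    rw [integral_congr_ae hc, integral_congr_ae hg.coeFn_toLp] at h3
    simpa using h3
  have hsum : ∀ n, (birkhoffSum T _root_.id n G : Lp ℝ 2 μ) =ᵐ[μ] birkhoffSum f g n := by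
    intro n
    induction n with
    | zero =>
      have h0 : birkhoffSum T _root_.id 0 G = 0 := by simp
      rw [h0]
      filter_upwards [Lp.coeFn_zero ℝ 2 μ] with x hx
      simp
    | succ n ih =>
      rw [birkhoffSum_succ]
      have h1 : (T^[n] G : Lp ℝ 2 μ) =ᵐ[μ] g ∘ f^[n] := by
        have : T^[n] G = Lp.compMeasurePreserving f^[n] (hf.iterate n) G := by
          rw [← Lp.compMeasurePreserving_iterate hf n]; rfl
        rw [this]
        refine (Lp.coeFn_compMeasurePreserving G (hf.iterate n)).trans ?_
        exact (hf.iterate n).quasiMeasurePreserving.ae_eq_comp hg.coeFn_toLp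
      filter_upwards [Lp.coeFn_add (birkhoffSum T _root_.id n G) (T^[n] G), ih, h1]
        with x hx h2 h3
      simp only [_root_.id] at hx ⊢
      rw [hx, birkhoffSum_succ]
      simp [h2, h3]
  refine TendstoInMeasure.congr (fun n => ?_) ?_ (tendstoInMeasure_of_tendsto_Lp hlim)
  · filter_upwards [Lp.coeFn_smul ((n : ℝ)⁻¹) (birkhoffSum T _root_.id n G), hsum n] with x h1 h2
    simp only [birkhoffAverage]
    rw [h1]
    simp [h2]
  · exact hc.trans (by rw [hcval]; rfl)

/-- The filter on `ℕ × M` of sets whose `n`-th sections have measure tending to one. Convergence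
along it is convergence in probability as `n → ∞`. -/
def probFilter (μ : Measure M) : Filter (ℕ × M) :=
  Filter.comk (fun S => Tendsto (fun n => μ {x | (n, x) ∈ S}) atTop (𝓝 0))
    (by simp)
    (fun t ht s hst => tendsto_of_tendsto_of_tendsto_of_le_of_le tendsto_const_nhds ht
      (fun _ => zero_le) (fun _ => measure_mono fun _ hx => hst hx))
    (fun s hs t ht => by
      have h := hs.add ht
      rw [add_zero] at h
      exact tendsto_of_tendsto_of_tendsto_of_le_of_le tendsto_const_nhds h
        (fun _ => zero_le) (fun _ => measure_union_le _ _))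

lemma eventually_probFilter {μ : Measure M} {p : ℕ × M → Prop} :
    (∀ᶠ z in probFilter μ, p z) ↔ Tendsto (fun n => μ {x | ¬ p (n, x)}) atTop (𝓝 0) := by
  rfl

lemma tendsto_probFilter {μ : Measure M} {u : ℕ → M → ℝ} {c : ℝ}
    (h : TendstoInMeasure μ u atTop (fun _ => c)) :
    Tendsto (fun z : ℕ × M => u z.1 z.2) (probFilter μ) (𝓝 c) := by
  rw [tendstoInMeasure_iff_dist] at h
  rw [Metric.tendsto_nhds]
  intro ε hε
  rw [eventually_probFilter]
  simpa only [not_lt] using h ε hε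

end MeanErgodic

/-! ### Empirical measures and the support -/

section Empirical

variable {M : Type*} [MeasurableSpace M]

lemma isProbabilityMeasure_empMeasure (f : M → M) {n : ℕ} (hn : n ≠ 0) (x : M) :
    IsProbabilityMeasure (empMeasure f n x) := by
  constructor
  simp only [empMeasure, Measure.smul_apply, Measure.coe_finsetSum, Finset.sum_apply,
    measure_univ, Finset.sum_const, Finset.card_range, smul_eq_mul, nsmul_eq_mul, mul_one]
  exact ENNReal.inv_mul_cancel (by exact_mod_cast hn) (ENNReal.natCast_ne_top n)

lemma integral_empMeasure (f : M → M) (n : ℕ) (x : M) {g : M → ℝ} (hg : StronglyMeasurable g) :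
    ∫ y, g y ∂(empMeasure f n x) = birkhoffAverage ℝ f g n x := by
  rw [empMeasure, integral_smul_measure, integral_finsetSum_measure]
  · simp [birkhoffAverage, birkhoffSum, integral_dirac' _ _ hg]
  · intro i _
    exact integrable_dirac' hg (by simp)

variable [MetricSpace M]

/-- With probability tending to one, the empirical measure lies in a given weak* neighbourhood of
`μ`. The case `n = 0`, where `empMeasure` is not a probability measure, is excluded. -/
lemma eventually_empMeasure_mem [BorelSpace M] {f : M → M}
    {μ : ProbabilityMeasure M}
    (herg : Ergodic f (μ : Measure M)) {U : Set (ProbabilityMeasure M)} (hU : U ∈ 𝓝 μ) :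
    ∀ᶠ z in probFilter (μ : Measure M), z.1 ≠ 0 →
      ∃ ν : ProbabilityMeasure M, ν ∈ U ∧ (ν : Measure M) = empMeasure f z.1 z.2 := by
  classical
  set e : ℕ × M → ProbabilityMeasure M := fun z =>
    if h : z.1 ≠ 0 then ⟨empMeasure f z.1 z.2, isProbabilityMeasure_empMeasure f h z.2⟩ else μ
    with he
  have hne : ∀ᶠ z in probFilter (μ : Measure M), z.1 ≠ 0 := by
    rw [eventually_probFilter]
    refine tendsto_const_nhds.congr' ?_
    filter_upwards [eventually_ne_atTop 0] with n hn
    simp [hn]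
  have ht : Tendsto e (probFilter (μ : Measure M)) (𝓝 μ) := by
    rw [ProbabilityMeasure.tendsto_iff_forall_integral_tendsto]
    intro g
    have hmem : MemLp g 2 (μ : Measure M) :=
      MemLp.of_bound g.continuous.aestronglyMeasurable ‖g‖ (Eventually.of_forall g.norm_coe_le_norm)
    refine (tendsto_probFilter (birkhoffAverage_tendstoInMeasure herg hmem)).congr' ?_
    filter_upwards [hne] with z hz
    have hez : (e z : Measure M) = empMeasure f z.1 z.2 := by
      simp [he, show z.1 ≠ 0 from hz]
    rw [hez]
    exact (integral_empMeasure f z.1 z.2 g.continuous.stronglyMeasurable).symm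
  filter_upwards [ht hU] with z hz h0
  refine ⟨e z, hz, ?_⟩
  simp [he, h0]

lemma eventually_mem_measSupport [CompactSpace M] (μ : Measure M) :
    ∀ᶠ z in probFilter μ, z.2 ∈ measSupport μ := by
  have h : μ {x | x ∉ measSupport μ} = 0 := by
    have h1 : μ.support ⊆ measSupport μ := by
      intro x hx U hU hxU
      exact (Measure.mem_support_iff_forall x).1 hx U (hU.mem_nhds hxU)
    exact measure_mono_null (compl_subset_compl.2 h1) Measure.measure_compl_support
  rw [eventually_probFilter]
  simp only [h]
  exact tendsto_const_nhds

end Empirical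

/-! ### Entropy of itineraries -/

section Coding

variable {M A : Type*}

/-- The itinerary of length `n` of `x` for the coding `σ`, that is the word
`σ x, σ (f x), …, σ (f^[n-1] x)`. -/
def itin (f : M → M) (σ : M → A) (n : ℕ) (x : M) : Fin n → A := fun i => σ (f^[(i : ℕ)] x)

lemma itin_append_preimage (f : M → M) (σ : M → A) (m n : ℕ) (a : Fin m → A) (b : Fin n → A) :
    itin f σ (m + n) ⁻¹' {Fin.append a b} =
      itin f σ m ⁻¹' {a} ∩ f^[m] ⁻¹' (itin f σ n ⁻¹' {b}) := by
  ext x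
  simp only [mem_preimage, mem_singleton_iff, mem_inter_iff, funext_iff, Fin.forall_fin_add,
    Fin.append_left, Fin.append_right, itin, Fin.val_castAdd, Fin.val_natAdd]
  simp only [← Function.iterate_add_apply, add_comm m]

variable [MeasurableSpace M]

lemma measurableSet_itin [Finite A] {f : M → M} (hf : Measurable f) {σ : M → A}
    (hσ : ∀ s, MeasurableSet (σ ⁻¹' {s})) (n : ℕ) (S : Set (Fin n → A)) :
    MeasurableSet (itin f σ n ⁻¹' S) := by
  have h1 : ∀ a, MeasurableSet (itin f σ n ⁻¹' {a}) := by
    intro a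
    have : itin f σ n ⁻¹' {a} = ⋂ i : Fin n, f^[(i : ℕ)] ⁻¹' (σ ⁻¹' {a i}) := by
      ext x
      simp [itin, funext_iff]
    rw [this]
    exact MeasurableSet.iInter fun i => (hf.iterate i) (hσ _)
  rw [← biUnion_preimage_singleton]
  exact MeasurableSet.biUnion (Set.to_countable S) fun a _ => h1 a

/-- Shannon entropy of the distribution of itineraries of length `n`. -/
noncomputable def ent [Fintype A] (f : M → M) (μ : Measure M) (σ : M → A) (n : ℕ) : ℝ :=
  ∑ a : Fin n → A, negMulLog (μ.real (itin f σ n ⁻¹' {a}))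

/-- Gibbs' inequality. -/
lemma gibbs {ι : Type*} [Fintype ι] {p q : ι → ℝ} (hp : ∀ i, 0 ≤ p i) (hq : ∀ i, 0 ≤ q i)
    (hpq : ∀ i, q i = 0 → p i = 0) (hp1 : ∑ i, p i = 1) (hq1 : ∑ i, q i ≤ 1) :
    ∑ i, negMulLog (p i) ≤ ∑ i, p i * (-Real.log (q i)) := by
  have key : ∀ i, negMulLog (p i) - p i * (-Real.log (q i)) ≤ q i - p i := by
    intro i
    rcases (hp i).eq_or_lt with h | h
    · simp [EF.negMulLog, ← h, hq i]
    · have hqi : 0 < q i := (hq i).lt_of_ne fun h0 => h.ne' (hpq i h0.symm)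
      have h1 := Real.log_le_sub_one_of_pos (div_pos hqi h)
      rw [Real.log_div hqi.ne' h.ne'] at h1
      have h2 := mul_le_mul_of_nonneg_left h1 h.le
      have h3 : p i * (q i / p i - 1) = q i - p i := by field_simp
      rw [h3] at h2
      simp only [EF.negMulLog]
      linarith
  have := Finset.sum_le_sum fun i (_ : i ∈ Finset.univ) => key i
  rw [Finset.sum_sub_distrib, Finset.sum_sub_distrib, hp1] at this
  linarith

variable {f : M → M} {μ : Measure M} [IsProbabilityMeasure μ] [Fintype A] {σ : M → A}

lemma sum_itin (hf : Measurable f) (hσ : ∀ s, MeasurableSet (σ ⁻¹' {s})) (n : ℕ)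
    (S : Finset (Fin n → A)) :
    ∑ a ∈ S, μ.real (itin f σ n ⁻¹' {a}) = μ.real (itin f σ n ⁻¹' S) :=
  sum_measureReal_preimage_singleton S fun a _ => measurableSet_itin hf hσ n _

lemma sum_itin_univ (hf : Measurable f) (hσ : ∀ s, MeasurableSet (σ ⁻¹' {s})) (n : ℕ) :
    ∑ a, μ.real (itin f σ n ⁻¹' {a}) = 1 := by
  rw [sum_itin hf hσ]; simp

lemma ent_nonneg (n : ℕ) : 0 ≤ ent f μ σ n := by
  refine Finset.sum_nonneg fun a _ => ?_
  rw [EF.negMulLog, neg_nonneg]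
  exact Real.mul_log_nonpos measureReal_nonneg measureReal_le_one

/-- The entropy of itineraries is subadditive in their length: Gibbs' inequality against the
product of the two marginals. -/
lemma ent_subadditive (hf : MeasurePreserving f μ μ) (hσ : ∀ s, MeasurableSet (σ ⁻¹' {s})) :
    Subadditive (ent f μ σ) := by
  intro m n
  set P : (Fin m → A) × (Fin n → A) → ℝ :=
    fun z => μ.real (itin f σ (m + n) ⁻¹' {Fin.append z.1 z.2}) with hP
  set p : (Fin m → A) → ℝ := fun a => μ.real (itin f σ m ⁻¹' {a}) with hp
  set q : (Fin n → A) → ℝ := fun b => μ.real (itin f σ n ⁻¹' {b}) with hq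
  have hPp : ∀ a b, P (a, b) ≤ p a := fun a b => by
    simp only [hP, hp, itin_append_preimage]
    exact measureReal_mono inter_subset_left
  have hmeas : ∀ k (S : Set (Fin k → A)), MeasurableSet (itin f σ k ⁻¹' S) :=
    measurableSet_itin hf.measurable hσ
  have hfib : ∀ b : Fin n → A, μ.real (f^[m] ⁻¹' (itin f σ n ⁻¹' {b})) = q b := fun b =>
    (hf.iterate m).measureReal_preimage (hmeas n _).nullMeasurableSet
  have hPq : ∀ a b, P (a, b) ≤ q b := fun a b => by
    rw [← hfib b]
    simp only [hP, itin_append_preimage]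
    exact measureReal_mono inter_subset_right
  have hS1 : ∀ a, ∑ b, P (a, b) = p a := by
    intro a
    have h := sum_measureReal_preimage_singleton (μ := μ.restrict (itin f σ m ⁻¹' {a}))
      (Finset.univ) (f := itin f σ n ∘ f^[m])
      (fun b _ => (hf.measurable.iterate m) (hmeas n {b}))
    simp only [Finset.coe_univ, preimage_univ, measureReal_restrict_apply MeasurableSet.univ,
      univ_inter] at h
    refine Eq.trans ?_ h
    refine Finset.sum_congr rfl fun b _ => ?_
    rw [preimage_comp, measureReal_restrict_apply ((hf.measurable.iterate m) (hmeas n {b}))]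
    simp only [hP, itin_append_preimage, inter_comm]
  have hS2 : ∀ b, ∑ a, P (a, b) = q b := by
    intro b
    have h := sum_measureReal_preimage_singleton (μ := μ.restrict (f^[m] ⁻¹' (itin f σ n ⁻¹' {b})))
      (Finset.univ) (f := itin f σ m) (fun a _ => hmeas m {a})
    simp only [Finset.coe_univ, preimage_univ, measureReal_restrict_apply MeasurableSet.univ,
      univ_inter] at h
    rw [← hfib b, ← h]
    refine Finset.sum_congr rfl fun a _ => ?_
    rw [measureReal_restrict_apply (hmeas m {a})]
    simp only [hP, itin_append_preimage]
  have hp1 : ∑ a, p a = 1 := sum_itin_univ hf.measurable hσ m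
  have hq1 : ∑ b, q b = 1 := sum_itin_univ hf.measurable hσ n
  have hent : ent f μ σ (m + n) = ∑ z, negMulLog (P z) :=
    ((Fin.appendEquiv m n).sum_comp
      fun c => negMulLog (μ.real (itin f σ (m + n) ⁻¹' {c}))).symm
  have hg := gibbs (p := P) (q := fun z => p z.1 * q z.2) (fun _ => measureReal_nonneg)
    (fun _ => mul_nonneg measureReal_nonneg measureReal_nonneg)
    (fun z hz => by
      rcases mul_eq_zero.1 hz with h | h
      · exact le_antisymm ((hPp z.1 z.2).trans h.le) measureReal_nonneg
      · exact le_antisymm ((hPq z.1 z.2).trans h.le) measureReal_nonneg)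
    (by rw [Fintype.sum_prod_type]; simp only [hS1, hp1])
    (by
      rw [Fintype.sum_prod_type]
      simp only [← Finset.mul_sum, hq1, mul_one, hp1, le_refl])
  rw [hent]
  refine hg.trans (le_of_eq ?_)
  have hterm : ∀ z, P z * -Real.log (p z.1 * q z.2) =
      P z * -Real.log (p z.1) + P z * -Real.log (q z.2) := by
    intro z
    rcases eq_or_ne (p z.1) 0 with h | h
    · have : P z = 0 := le_antisymm ((hPp z.1 z.2).trans h.le) measureReal_nonneg
      simp [this]
    rcases eq_or_ne (q z.2) 0 with h' | h'
    · have : P z = 0 := le_antisymm ((hPq z.1 z.2).trans h'.le) measureReal_nonneg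
      simp [this]
    rw [Real.log_mul h h']; ring
  rw [Finset.sum_congr rfl fun z _ => hterm z, Finset.sum_add_distrib]
  congr 1
  · rw [Fintype.sum_prod_type]
    simp only [← Finset.sum_mul, hS1]
    refine Finset.sum_congr rfl fun a _ => ?_
    simp only [EF.negMulLog, hp]; ring
  · rw [Fintype.sum_prod_type_right]
    simp only [← Finset.sum_mul, hS2]
    refine Finset.sum_congr rfl fun a _ => ?_
    simp only [EF.negMulLog, hq]; ring

/-- By Fekete's lemma the asymptotic entropy is a lower bound for the entropy rate at each
length. -/
lemma limsup_ent_le (hf : MeasurePreserving f μ μ) (hσ : ∀ s, MeasurableSet (σ ⁻¹' {s}))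
    {n : ℕ} (hn : n ≠ 0) :
    limsup (fun n : ℕ => ent f μ σ n / n) atTop ≤ ent f μ σ n / n := by
  have hbdd : BddBelow (range fun n : ℕ => ent f μ σ n / n) :=
    ⟨0, by rintro _ ⟨k, rfl⟩; exact div_nonneg (ent_nonneg k) k.cast_nonneg⟩
  have hs := ent_subadditive hf hσ
  rw [(hs.tendsto_lim hbdd).limsup_eq]
  exact hs.lim_le_div hbdd hn

/-- If, up to a set of small measure, all itineraries of length `n` lie within Hamming distance
`r` of the itineraries of the points of `Γ`, then their entropy is at most `log #Γ` up to small
errors. This is Gibbs' inequality against the mixture of the uniform distribution on words with the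
average, over `x ∈ Γ`, of product weights giving every disagreement with the itinerary of `x` a
factor `t`. -/
lemma ent_le_log_card (hf : Measurable f) (hσ : ∀ s, MeasurableSet (σ ⁻¹' {s})) (n : ℕ)
    {G : Set M} {Γ : Finset M} (hΓ : Γ.Nonempty) {t r : ℝ} (ht : 0 < t) (ht1 : t ≤ 1) (hr : 0 ≤ r)
    (hcov : ∀ y ∈ G, ∃ x ∈ Γ,
      (Set.ncard {i : Fin n | σ (f^[(i : ℕ)] y) ≠ σ (f^[(i : ℕ)] x)} : ℝ) ≤ r) :
    ent f μ σ n ≤ Real.log 2 + Real.log Γ.card + Fintype.card A * t * n + r * (-Real.log t)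
      + n * Real.log (Fintype.card A) * μ.real Gᶜ := by
  classical
  obtain ⟨x₀, hx₀⟩ := hΓ
  have : Nonempty A := ⟨σ x₀⟩
  set c : ℝ := (Fintype.card A : ℝ) with hc
  have hc0 : 1 ≤ c := by rw [hc]; exact_mod_cast Fintype.card_pos
  have hcpos : 0 < c := by linarith
  have hcard : 0 < (Γ.card : ℝ) := by exact_mod_cast Finset.card_pos.2 ⟨x₀, hx₀⟩
  set k : A → A → ℝ := fun s s' => if s = s' then 1 else t with hk
  have hkpos : ∀ s s', 0 < k s s' := by intro s s'; simp only [hk]; split_ifs <;> linarith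
  have hksum : ∀ s', ∑ s, k s s' ≤ Real.exp (c * t) := by
    intro s'
    have h1 : ∑ s, k s s' ≤ ∑ s, ((if s = s' then 1 else 0) + t) := by
      refine Finset.sum_le_sum fun s _ => ?_
      simp only [hk]; split_ifs <;> linarith
    have h2 : ∑ s : A, ((if s = s' then (1 : ℝ) else 0) + t) = 1 + c * t := by
      rw [Finset.sum_add_distrib]; simp [hc]
    have h3 := Real.add_one_le_exp (c * t)
    linarith
  set wt : (Fin n → A) → M → ℝ := fun a x => ∏ i, k (a i) (itin f σ n x i) with hwt
  have hwtpos : ∀ a x, 0 < wt a x := fun a x => Finset.prod_pos fun i _ => hkpos _ _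
  have hwtsum : ∀ x, ∑ a, wt a x ≤ Real.exp (c * t * n) := by
    intro x
    have h1 : ∑ a, wt a x = ∏ i : Fin n, ∑ s, k s (itin f σ n x i) := by
      rw [Finset.prod_univ_sum, Fintype.piFinset_univ]
    rw [h1]
    refine (Finset.prod_le_prod (g := fun _ => Real.exp (c * t))
      (fun i _ => Finset.sum_nonneg fun s _ => (hkpos _ _).le)
      (fun i _ => hksum (itin f σ n x i))).trans (le_of_eq ?_)
    rw [Finset.prod_const, Finset.card_univ, Fintype.card_fin, ← Real.exp_nat_mul]
    ring_nf
  set q : (Fin n → A) → ℝ := fun a =>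
    (1 / 2) * ((Γ.card : ℝ)⁻¹ * Real.exp (-(c * t * n)) * ∑ x ∈ Γ, wt a x) +
      (1 / 2) * (c ^ n)⁻¹ with hq
  have hunif : 0 < (c ^ n)⁻¹ := by positivity
  have hmix : ∀ a, 0 ≤ (Γ.card : ℝ)⁻¹ * Real.exp (-(c * t * n)) * ∑ x ∈ Γ, wt a x := fun a =>
    mul_nonneg (by positivity) (Finset.sum_nonneg fun x _ => (hwtpos a x).le)
  have hqpos : ∀ a, 0 < q a := fun a => by
    have := hmix a
    simp only [hq]; linarith
  have hq1 : ∑ a, q a ≤ 1 := by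
    simp only [hq]
    rw [Finset.sum_add_distrib, ← Finset.mul_sum, ← Finset.mul_sum, Finset.sum_comm]
    have h1 : ∑ x ∈ Γ, ∑ a, wt a x ≤ Γ.card * Real.exp (c * t * n) := by
      refine (Finset.sum_le_sum fun x _ => hwtsum x).trans (le_of_eq ?_)
      simp
    have h2 : (Γ.card : ℝ)⁻¹ * Real.exp (-(c * t * n)) * ∑ x ∈ Γ, ∑ a, wt a x ≤ 1 := by
      refine (mul_le_mul_of_nonneg_left h1 (by positivity)).trans (le_of_eq ?_)
      rw [Real.exp_neg]
      field_simp
    have h3 : ∑ _a : Fin n → A, (1 / 2 : ℝ) * (c ^ n)⁻¹ = 1 / 2 := by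
      rw [Finset.sum_const, Finset.card_univ, Fintype.card_fun, Fintype.card_fin, nsmul_eq_mul]
      push_cast
      rw [← hc]
      field_simp
    linarith
  set L : ℝ := Real.log 2 + Real.log Γ.card + c * t * n + r * (-Real.log t) with hL
  have hlogc : 0 ≤ Real.log c := Real.log_nonneg hc0
  have hlogt : Real.log t ≤ 0 := Real.log_nonpos ht.le ht1
  -- a word realised in `G` is charged by the product weight around a nearby itinerary of `Γ`
  have hgood : ∀ a, (itin f σ n ⁻¹' {a} ∩ G).Nonempty → -Real.log (q a) ≤ L := by
    rintro a ⟨y, hya, hyG⟩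
    obtain ⟨x, hx, hxr⟩ := hcov y hyG
    have hw : wt a x = t ^ (Set.ncard {i : Fin n | σ (f^[(i : ℕ)] y) ≠ σ (f^[(i : ℕ)] x)}) := by
      simp only [hwt, hk]
      rw [Finset.prod_ite, Finset.prod_const_one, one_mul, Finset.prod_const]
      congr 1
      rw [← Set.ncard_coe_finset]
      congr 1
      ext i
      have : a i = σ (f^[(i : ℕ)] y) := (congrFun (hya : itin f σ n y = a) i).symm
      change i ∈ ((Finset.univ.filter fun i => ¬ a i = itin f σ n x i : Finset (Fin n)) : Set _) ↔ _
      rw [Finset.mem_coe, Finset.mem_filter, this]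
      simp [itin]
    have h1 : (1 / 2) * ((Γ.card : ℝ)⁻¹ * Real.exp (-(c * t * n)) * wt a x) ≤ q a := by
      have h2 : wt a x ≤ ∑ x ∈ Γ, wt a x :=
        Finset.single_le_sum (f := fun x => wt a x) (fun x _ => (hwtpos a x).le) hx
      have h3 := mul_le_mul_of_nonneg_left h2
        (show 0 ≤ (Γ.card : ℝ)⁻¹ * Real.exp (-(c * t * n)) by positivity)
      simp only [hq]; linarith
    have hpos : 0 < (1 / 2) * ((Γ.card : ℝ)⁻¹ * Real.exp (-(c * t * n)) * wt a x) := by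
      have := hwtpos a x
      positivity
    have h4 := Real.log_le_log hpos h1
    rw [hw, Real.log_mul (by norm_num) (by positivity), Real.log_mul (by positivity)
      (by positivity), Real.log_mul (by positivity) (by positivity), Real.log_exp, Real.log_inv,
      Real.log_pow, one_div, Real.log_inv] at h4
    have h5 := mul_le_mul_of_nonneg_right hxr (neg_nonneg.2 hlogt)
    simp only [hL]; linarith
  have hunifle : ∀ a, -Real.log (q a) ≤ Real.log 2 + n * Real.log c := by
    intro a
    have h1 : (1 / 2) * (c ^ n)⁻¹ ≤ q a := by
      have := hmix a
      simp only [hq]; linarith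
    have h2 := Real.log_le_log (by positivity) h1
    rw [Real.log_mul (by norm_num) hunif.ne', Real.log_inv, Real.log_pow, one_div,
      Real.log_inv] at h2
    linarith
  set bad : Finset (Fin n → A) :=
    Finset.univ.filter fun a => ¬ (itin f σ n ⁻¹' {a} ∩ G).Nonempty with hbad
  have hle : ∀ a, -Real.log (q a) ≤ L + if a ∈ bad then n * Real.log c else 0 := by
    intro a
    by_cases ha : (itin f σ n ⁻¹' {a} ∩ G).Nonempty
    · have : a ∉ bad := by simp [hbad, ha]
      rw [if_neg this, add_zero]
      exact hgood a ha
    · have : a ∈ bad := by simpa [hbad] using ha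
      rw [if_pos this]
      have h1 := hunifle a
      have h2 : 0 ≤ Real.log Γ.card := Real.log_natCast_nonneg _
      have h3 : 0 ≤ c * t * n := by positivity
      have h4 : 0 ≤ r * (-Real.log t) := mul_nonneg hr (neg_nonneg.2 hlogt)
      simp only [hL]; linarith
  have hbadG : μ.real (itin f σ n ⁻¹' bad) ≤ μ.real Gᶜ := by
    refine measureReal_mono fun y hy hyG => ?_
    have h1 : itin f σ n y ∈ bad := hy
    simp only [hbad, Finset.mem_filter, Finset.mem_univ, true_and] at h1
    exact h1 ⟨y, rfl, hyG⟩
  calc ent f μ σ n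
      ≤ ∑ a, μ.real (itin f σ n ⁻¹' {a}) * (-Real.log (q a)) :=
        gibbs (fun _ => measureReal_nonneg) (fun a => (hqpos a).le)
          (fun a h => absurd h (hqpos a).ne') (sum_itin_univ hf hσ n) hq1
    _ ≤ ∑ a, μ.real (itin f σ n ⁻¹' {a}) * (L + if a ∈ bad then n * Real.log c else 0) :=
        Finset.sum_le_sum fun a _ => mul_le_mul_of_nonneg_left (hle a) measureReal_nonneg
    _ = L + n * Real.log c * μ.real (itin f σ n ⁻¹' bad) := by
        simp only [mul_add, Finset.sum_add_distrib, ← Finset.sum_mul, sum_itin_univ hf hσ n,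
          one_mul, mul_ite, mul_zero]
        rw [Finset.sum_ite_mem, Finset.univ_inter, ← Finset.sum_mul, sum_itin hf hσ]
        ring
    _ ≤ L + n * Real.log c * μ.real Gᶜ := by
        gcongr

end Coding

/-! ### Separated sets and a separated core -/

section Separated

/-- If no `(n, ε)`-separated finite subset of `G` has `k` elements, a separated subset of maximal
cardinality is an `(n, ε)`-net of `G`. -/
lemma exists_sep_or_net {M : Type*} [MetricSpace M] (f : M → M) (n : ℕ) {ε : ℝ} (hε : 0 ≤ ε)
    (G : Set M) (k : ℕ) :
    (∃ Γ : Finset M, ↑Γ ⊆ G ∧ IsDynSep f n ε ↑Γ ∧ k ≤ Γ.card) ∨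
    (∃ Γ : Finset M, ↑Γ ⊆ G ∧ IsDynSep f n ε ↑Γ ∧ Γ.card < k ∧
      ∀ y ∈ G, ∃ x ∈ Γ, ∀ j ≤ n, dist (f^[j] y) (f^[j] x) ≤ ε) := by
  classical
  by_cases h : ∃ Γ : Finset M, ↑Γ ⊆ G ∧ IsDynSep f n ε ↑Γ ∧ k ≤ Γ.card
  · exact Or.inl h
  push Not at h
  right
  set p : ℕ → Prop := fun m => ∃ Γ : Finset M, ↑Γ ⊆ G ∧ IsDynSep f n ε ↑Γ ∧ Γ.card = m
  have hp0 : p 0 := ⟨∅, by simp, by simp [IsDynSep], rfl⟩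
  obtain ⟨Γ, hΓG, hΓs, hΓc⟩ := Nat.findGreatest_spec (P := p) (Nat.zero_le k) hp0
  refine ⟨Γ, hΓG, hΓs, h Γ hΓG hΓs, fun y hy => ?_⟩
  by_contra! hcon
  have hyΓ : y ∉ Γ := fun hy' => by
    obtain ⟨j, hj, hlt⟩ := hcon y hy'
    rw [dist_self] at hlt
    exact absurd hlt (not_lt.2 hε)
  have hG' : ↑(insert y Γ) ⊆ G := by
    rw [Finset.coe_insert]; exact insert_subset hy hΓG
  have hs' : IsDynSep f n ε ↑(insert y Γ) := by
    rw [Finset.coe_insert]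
    refine hΓs.insert fun x hx hne => ⟨hcon x hx, ?_⟩
    obtain ⟨j, hj, hlt⟩ := hcon x hx
    exact ⟨j, hj, by rwa [dist_comm]⟩
  have hlt := h _ hG' hs'
  have := Nat.le_findGreatest (P := p) hlt.le ⟨_, hG', hs', rfl⟩
  rw [Finset.card_insert_of_notMem hyΓ, hΓc] at this
  omega

/-- Outside a set of small measure, the symbol of a point is determined by its position up to `ε`:
inner regularity replaces the fibres of `σ` by disjoint compact sets, which are at positive
distance from one another. -/
lemma exists_separated_core {M : Type*} [MetricSpace M] [CompactSpace M] [MeasurableSpace M]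
    [BorelSpace M] (μ : Measure M) [IsProbabilityMeasure μ] {A : Type*} [Fintype A] {σ : M → A}
    (hσ : ∀ s, MeasurableSet (σ ⁻¹' {s})) {δ : ℝ} (hδ : 0 < δ) :
    ∃ (K : Set M) (ε : ℝ), MeasurableSet K ∧ μ.real Kᶜ < δ ∧ 0 < ε ∧
      ∀ x ∈ K, ∀ y ∈ K, dist x y ≤ ε → σ x = σ y := by
  classical
  have hδ' : ENNReal.ofReal (δ / (Fintype.card A + 1)) ≠ 0 := by
    have : 0 < δ / (Fintype.card A + 1) := by positivity
    simpa using this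
  choose F hFs hFc hFm using fun s =>
    (hσ s).exists_isClosed_sdiff_lt (μ := μ) (measure_ne_top _ _) hδ'
  refine ⟨⋃ s, F s, ?_⟩
  have hdist : ∀ z : A × A, ∃ r : ℝ, 0 < r ∧
      (z.1 ≠ z.2 → ∀ x ∈ F z.1, ∀ y ∈ F z.2, r < dist x y) := by
    intro z
    by_cases hz : z.1 = z.2
    · exact ⟨1, one_pos, fun h => absurd hz h⟩
    · have hd : Disjoint (F z.1) (F z.2) := by
        rw [Set.disjoint_left]
        intro x hx hy
        exact hz ((hFs _ hx).symm.trans (hFs _ hy))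
      obtain ⟨r, hr, h⟩ :=
        Metric.exists_pos_forall_lt_edist (hFc z.1).isCompact (hFc z.2) hd
      refine ⟨r, hr, fun _ x hx y hy => ?_⟩
      have := h x hx y hy
      rw [edist_nndist] at this
      exact_mod_cast this
  choose ρ hρ hρd using hdist
  obtain ⟨ε, hε, hερ⟩ : ∃ ε : ℝ, 0 < ε ∧ ∀ z, ε ≤ ρ z := by
    rcases isEmpty_or_nonempty (A × A) with h | h
    · exact ⟨1, one_pos, fun z => isEmptyElim z⟩
    · obtain ⟨z, hz⟩ := Finite.exists_min ρ
      exact ⟨ρ z, hρ z, hz⟩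
  refine ⟨ε, MeasurableSet.iUnion fun s => (hFc s).measurableSet, ?_, hε, ?_⟩
  · have hsub : (⋃ s, F s)ᶜ ⊆ ⋃ s, (σ ⁻¹' {s} \ F s) := by
      intro x hx
      simp only [mem_compl_iff, mem_iUnion, not_exists] at hx
      exact mem_iUnion.2 ⟨σ x, rfl, hx _⟩
    have h1 : ∀ s, μ.real (σ ⁻¹' {s} \ F s) ≤ δ / (Fintype.card A + 1) := fun s =>
      ENNReal.toReal_le_of_le_ofReal (by positivity) (hFm s).le
    calc μ.real (⋃ s, F s)ᶜ ≤ μ.real (⋃ s, (σ ⁻¹' {s} \ F s)) := measureReal_mono hsub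
      _ ≤ ∑ s, μ.real (σ ⁻¹' {s} \ F s) := measureReal_iUnion_fintype_le _
      _ ≤ ∑ _s : A, δ / (Fintype.card A + 1) := Finset.sum_le_sum fun s _ => h1 s
      _ = Fintype.card A * (δ / (Fintype.card A + 1)) := by simp
      _ < δ := by
        rw [← mul_div_assoc, div_lt_iff₀ (by positivity)]
        nlinarith
  · intro x hx y hy hxy
    obtain ⟨s, hs⟩ := mem_iUnion.1 hx
    obtain ⟨s', hs'⟩ := mem_iUnion.1 hy
    have e1 : σ x = s := hFs s hs
    have e2 : σ y = s' := hFs s' hs'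
    rw [e1, e2]
    by_contra hne
    exact absurd (hρd (s, s') hne x hs y hs') (not_lt.2 (hxy.trans (hερ _)))

end Separated

/-! ### Large separated sets of typical points -/

section Main

variable {M : Type*}

lemma ncard_visits (f : M → M) (S : Set M) (n : ℕ) (x : M) :
    (Set.ncard {i : Fin n | f^[(i : ℕ)] x ∈ S} : ℝ) =
      birkhoffSum f (S.indicator fun _ => (1 : ℝ)) n x := by
  classical
  rw [birkhoffSum, Finset.sum_range]
  simp only [Set.indicator_apply]
  rw [Finset.sum_boole, ← Set.ncard_coe_finset]
  simp

variable [MeasurableSpace M]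

/-- A finite measurable partition is the fibre partition of a coding map. -/
lemma exists_coding {P : Finset (Set M)} (hP : IsMeasPartition P) :
    ∃ σ : M → {p // p ∈ P}, ∀ s, σ ⁻¹' {s} = (s : Set M) := by
  have hcov : ∀ x, ∃ s : {p // p ∈ P}, x ∈ (s : Set M) := by
    intro x
    have hx : x ∈ ⋃₀ (↑P : Set (Set M)) := hP.2.1 ▸ mem_univ x
    obtain ⟨p, hp, hxp⟩ := hx
    exact ⟨⟨p, hp⟩, hxp⟩
  choose σ hσ using hcov
  refine ⟨σ, fun s => ?_⟩
  ext x
  constructor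
  · rintro rfl
    exact hσ x
  · intro hx
    by_contra hne
    have hne' : (σ x : Set M) ≠ s := fun h => hne (Subtype.ext h)
    exact Set.disjoint_left.1 (hP.2.2 (σ x).2 s.2 hne') (hσ x) hx

lemma refinedInfo_eq_ent (f : M → M) (μ : Measure M) {P : Finset (Set M)}
    {σ : M → {p // p ∈ P}} (hσ : ∀ s, σ ⁻¹' {s} = (s : Set M)) (n : ℕ) :
    refinedInfo f μ P n = ent f μ σ n := by
  refine Finset.sum_congr rfl fun a _ => ?_
  have : ⋂ i : Fin n, f^[(i : ℕ)] ⁻¹' (a i : Set M) = itin f σ n ⁻¹' {a} := by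
    ext x
    simp only [← hσ]
    simp [itin, funext_iff]
  rw [this]
  rfl

lemma measEntropy_nonneg (f : M → M) (μ : Measure M) [IsProbabilityMeasure μ]
    (hf : MeasurePreserving f μ μ) : 0 ≤ measEntropy f μ := by
  have hP : IsMeasPartition ({univ} : Finset (Set M)) := by
    refine ⟨by simp, by simp, by simp⟩
  obtain ⟨σ, hσ⟩ := exists_coding hP
  have hσm : ∀ s, MeasurableSet (σ ⁻¹' {s}) := fun s => by rw [hσ s]; exact hP.1 _ s.2
  refine le_trans ?_ (le_iSup₂_of_le _ hP le_rfl)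
  have hbdd : BddBelow (range fun n : ℕ => ent f μ σ n / n) :=
    ⟨0, by rintro _ ⟨k, rfl⟩; exact div_nonneg (ent_nonneg k) k.cast_nonneg⟩
  have ht := (ent_subadditive hf hσm).tendsto_lim hbdd
  rw [partEntropy]
  simp only [refinedInfo_eq_ent f μ hσ]
  rw [ht.limsup_eq]
  exact_mod_cast ge_of_tendsto' ht fun n => div_nonneg (ent_nonneg n) n.cast_nonneg

lemma eventually_birkhoffAverage_indicator_lt {f : M → M} {μ : Measure M} [IsProbabilityMeasure μ]
    (herg : Ergodic f μ) {S : Set M} (hS : MeasurableSet S) {δ : ℝ} (hδ : μ.real S < δ) :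
    ∀ᶠ z : ℕ × M in probFilter μ,
      birkhoffAverage ℝ f (S.indicator fun _ => (1 : ℝ)) z.1 z.2 < δ := by
  have hmem : MemLp (S.indicator fun _ => (1 : ℝ)) 2 μ :=
    memLp_indicator_const 2 hS 1 (Or.inr (measure_ne_top _ _))
  have hint : ∫ x, S.indicator (fun _ => (1 : ℝ)) x ∂μ = μ.real S := by
    rw [integral_indicator_const _ hS]; simp
  have hlim : Tendsto
      (fun z : ℕ × M => birkhoffAverage ℝ f (S.indicator fun _ => (1 : ℝ)) z.1 z.2)
      (probFilter μ) (𝓝 (μ.real S)) := by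
    rw [← hint]
    exact tendsto_probFilter (birkhoffAverage_tendstoInMeasure herg hmem)
  exact hlim.eventually_lt_const hδ

variable [MetricSpace M] [CompactSpace M] [BorelSpace M]

/-- Separated sets of typical points of cardinality at least `exp (n * c)`, for every `c` below the
entropy of a partition. -/
lemma exists_large_sep {f : M → M} {μ : ProbabilityMeasure M} (herg : Ergodic f (μ : Measure M))
    {P : Finset (Set M)} (hP : IsMeasPartition P) {c : ℝ}
    (hc : c < partEntropy f (μ : Measure M) P) :
    ∃ ε : ℝ, 0 < ε ∧ ∀ U ∈ 𝓝 μ, ∃ N : ℕ, ∀ n : ℕ, N < n →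
      ∃ Γ : Finset M, ↑Γ ⊆ measSupport (μ : Measure M) ∧ IsDynSep f n ε ↑Γ ∧
        (∀ x ∈ Γ, ∃ ν : ProbabilityMeasure M, ν ∈ U ∧ (ν : Measure M) = empMeasure f n x) ∧
        Real.exp (n * c) ≤ Γ.card := by
  obtain ⟨σ, hσ⟩ := exists_coding hP
  have hσm : ∀ s, MeasurableSet (σ ⁻¹' {s}) := fun s => by rw [hσ s]; exact hP.1 _ s.2
  have hf : MeasurePreserving f (μ : Measure M) μ := herg.toMeasurePreserving
  set h := partEntropy f (μ : Measure M) P with hh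
  have hent : ∀ n : ℕ, n ≠ 0 → n * h ≤ ent f (μ : Measure M) σ n := by
    intro n hn
    have h1 := limsup_ent_le hf hσm hn
    have h2 : h = limsup (fun n : ℕ => ent f (μ : Measure M) σ n / n) atTop := by
      simp only [hh, partEntropy, refinedInfo_eq_ent f (μ : Measure M) hσ]
    rw [← h2, le_div_iff₀ (by positivity)] at h1
    linarith
  -- `η` bounds each of the four error terms in `ent_le_log_card`
  set η : ℝ := (h - c) / 5 with hη
  have hηpos : 0 < η := by rw [hη]; linarith
  set p : ℝ := (Fintype.card {p // p ∈ P} : ℝ) with hp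
  have hp0 : 0 ≤ p := Nat.cast_nonneg _
  obtain ⟨t, ht, ht1, hpt⟩ : ∃ t : ℝ, 0 < t ∧ t ≤ 1 ∧ p * t ≤ η := by
    refine ⟨min 1 (η / (p + 1)), by positivity, min_le_left _ _, ?_⟩
    calc p * min 1 (η / (p + 1)) ≤ p * (η / (p + 1)) := by gcongr; exact min_le_right _ _
      _ ≤ η := by
        rw [← mul_div_assoc, div_le_iff₀ (by positivity)]
        nlinarith
  have hlogt : 0 ≤ -Real.log t := neg_nonneg.2 (Real.log_nonpos ht.le ht1)
  obtain ⟨δ, hδ, hδt⟩ : ∃ δ : ℝ, 0 < δ ∧ 2 * δ * (-Real.log t) ≤ η := by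
    refine ⟨η / (2 * (-Real.log t + 1)), by positivity, ?_⟩
    have : 2 * (η / (2 * (-Real.log t + 1))) * (-Real.log t) =
        η * (-Real.log t) / (-Real.log t + 1) := by
      field_simp
    rw [this, div_le_iff₀ (by positivity)]
    nlinarith
  obtain ⟨K, ε, hKm, hKμ, hε, hKε⟩ := exists_separated_core (μ : Measure M) hσm hδ
  refine ⟨ε, hε, fun U hU => ?_⟩
  set g : M → ℝ := Kᶜ.indicator fun _ => (1 : ℝ) with hg
  set good : ℕ × M → Prop := fun z => z.2 ∈ measSupport (μ : Measure M) ∧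
    (z.1 ≠ 0 → ∃ ν : ProbabilityMeasure M, ν ∈ U ∧ (ν : Measure M) = empMeasure f z.1 z.2) ∧
    birkhoffAverage ℝ f g z.1 z.2 < δ with hgood
  have hev : ∀ᶠ z in probFilter (μ : Measure M), good z := by
    filter_upwards [eventually_mem_measSupport (μ : Measure M), eventually_empMeasure_mem herg hU,
      eventually_birkhoffAverage_indicator_lt herg hKm.compl hKμ] with z h1 h2 h3
    exact ⟨h1, h2, h3⟩
  rw [eventually_probFilter] at hev
  have hev' : Tendsto (fun n => (μ : Measure M).real {x | ¬ good (n, x)}) atTop (𝓝 0) := by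
    have := (ENNReal.tendsto_toReal ENNReal.zero_ne_top).comp hev
    rwa [ENNReal.toReal_zero] at this
  have hev1 : ∀ᶠ n in atTop, (μ : Measure M).real {x | ¬ good (n, x)} < 1 :=
    hev'.eventually (gt_mem_nhds one_pos)
  have hev2 : ∀ᶠ n in atTop, Real.log p * (μ : Measure M).real {x | ¬ good (n, x)} < η := by
    have := hev'.const_mul (Real.log p)
    rw [mul_zero] at this
    exact this.eventually (gt_mem_nhds hηpos)
  have hev3 : ∀ᶠ n : ℕ in atTop, Real.log 2 / n < η :=
    (tendsto_const_div_atTop_nhds_zero_nat _).eventually (gt_mem_nhds hηpos)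
  obtain ⟨N, hN⟩ := eventually_atTop.1 (hev1.and (hev2.and hev3))
  refine ⟨N, fun n hn => ?_⟩
  obtain ⟨hn1, hn2, hn3⟩ := hN n hn.le
  have hn0 : n ≠ 0 := by omega
  have hnpos : (0 : ℝ) < n := by positivity
  set G : Set M := {x | good (n, x)} with hG
  have hGc : {x | ¬ good (n, x)} = Gᶜ := rfl
  rw [hGc] at hn1 hn2
  rcases exists_sep_or_net f n hε.le G ⌈Real.exp (n * c)⌉₊ with
    ⟨Γ, hΓG, hΓs, hΓc⟩ | ⟨Γ, hΓG, hΓs, hΓc, hΓn⟩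
  · exact ⟨Γ, fun x hx => (hΓG hx).1, hΓs, fun x hx => (hΓG hx).2.1 hn0, Nat.ceil_le.1 hΓc⟩
  exfalso
  have hΓne : Γ.Nonempty := by
    by_contra hne
    rw [Finset.not_nonempty_iff_eq_empty] at hne
    have hGe : G = ∅ := by
      refine eq_empty_of_forall_notMem fun y hy => ?_
      obtain ⟨x, hx, -⟩ := hΓn y hy
      simp [hne] at hx
    rw [hGe] at hn1
    simp at hn1
  have hvis : ∀ x ∈ G, (Set.ncard {i : Fin n | f^[(i : ℕ)] x ∈ Kᶜ} : ℝ) ≤ δ * n := by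
    intro x hx
    have h1 : (n : ℝ)⁻¹ * birkhoffSum f g n x < δ := hx.2.2
    rw [ncard_visits, ← hg]
    rw [inv_mul_lt_iff₀ hnpos] at h1
    linarith
  -- two points that stay `ε`-close have equal symbols whenever both orbits are in `K`
  have hcov : ∀ y ∈ G, ∃ x ∈ Γ,
      (Set.ncard {i : Fin n | σ (f^[(i : ℕ)] y) ≠ σ (f^[(i : ℕ)] x)} : ℝ) ≤ 2 * δ * n := by
    intro y hy
    obtain ⟨x, hx, hxy⟩ := hΓn y hy
    refine ⟨x, hx, ?_⟩
    have hsub : {i : Fin n | σ (f^[(i : ℕ)] y) ≠ σ (f^[(i : ℕ)] x)} ⊆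
        {i : Fin n | f^[(i : ℕ)] y ∈ Kᶜ} ∪ {i : Fin n | f^[(i : ℕ)] x ∈ Kᶜ} := by
      intro i hi
      by_contra hcon
      simp only [mem_union, mem_ofPred_eq, mem_compl_iff, not_or, not_not] at hcon
      exact hi (hKε _ hcon.1 _ hcon.2 (hxy i i.2.le))
    have h1 := (Set.ncard_le_ncard hsub (Set.toFinite _)).trans (Set.ncard_union_le _ _)
    have h2 : (Set.ncard {i : Fin n | σ (f^[(i : ℕ)] y) ≠ σ (f^[(i : ℕ)] x)} : ℝ) ≤
      (Set.ncard {i : Fin n | f^[(i : ℕ)] y ∈ Kᶜ} : ℝ) +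
        (Set.ncard {i : Fin n | f^[(i : ℕ)] x ∈ Kᶜ} : ℝ) := by exact_mod_cast h1
    have h3 := hvis y hy
    have h4 := hvis x (hΓG hx)
    linarith
  have hmain := ent_le_log_card (μ := (μ : Measure M)) hf.measurable hσm n hΓne ht ht1
    (by positivity) hcov
  rw [← hp] at hmain
  have hlow := hent n hn0
  rw [div_lt_iff₀ hnpos] at hn3
  have e1 := mul_le_mul_of_nonneg_right hpt hnpos.le
  have e2 := mul_le_mul_of_nonneg_right hδt hnpos.le
  have e3 := mul_lt_mul_of_pos_left hn2 hnpos
  have hnc : n * c = n * h - 5 * (η * n) := by rw [hη]; ring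
  have hlog : n * c < Real.log Γ.card := by
    have : 0 < η * n := by positivity
    linarith
  have hcard : Real.exp (n * c) < Γ.card := by
    rwa [Real.lt_log_iff_exp_lt (by exact_mod_cast Finset.card_pos.2 hΓne)] at hlog
  exact absurd (Nat.lt_ceil.1 hΓc) (not_lt.2 hcard.le)

end Main

end KatokSep

open KatokSep

/-- Katok-type construction of separated sets inside the support of
an ergodic measure, with empirical measures in a prescribed weak* neighborhood and
cardinality growth governed by the entropy. -/
theorem ergodic_measure_separated_sets
    {M : Type*} [MetricSpace M] [CompactSpace M] [MeasurableSpace M] [BorelSpace M]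
    (f : M → M) (hf : IsHomeomorph f)
    (μ : ProbabilityMeasure M) (herg : Ergodic f (μ : Measure M))
    (κ : ℝ) (hκ : 0 < κ) :
    ∃ ε : ℝ, 0 < ε ∧
      ∀ U : Set (ProbabilityMeasure M), U ∈ 𝓝 μ →
        ∃ N : ℕ, ∀ n : ℕ, N < n →
          ∃ Γ : Finset M, ↑Γ ⊆ measSupport (μ : Measure M) ∧ IsDynSep f n ε ↑Γ ∧
            (∀ x ∈ Γ, ∃ ν : ProbabilityMeasure M, ν ∈ U ∧
              (ν : Measure M) = empMeasure f n x) ∧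
            (measEntropy f (μ : Measure M) ≠ ⊤ →
              |Real.log (Γ.card : ℝ) / (n : ℝ) -
                (measEntropy f (μ : Measure M)).toReal| < κ) ∧
            (measEntropy f (μ : Measure M) = ⊤ →
              1 / κ < Real.log (Γ.card : ℝ) / (n : ℝ)) := by
  have h0 := measEntropy_nonneg f (μ : Measure M) herg.toMeasurePreserving
  -- every rate `c` below the entropy is exceeded by the entropy of some partition
  have key : ∀ c : ℝ, (c : EReal) < measEntropy f (μ : Measure M) →
      ∃ ε : ℝ, 0 < ε ∧ ∀ U ∈ 𝓝 μ, ∃ N : ℕ, ∀ n : ℕ, N < n →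
        ∃ Γ : Finset M, ↑Γ ⊆ measSupport (μ : Measure M) ∧ IsDynSep f n ε ↑Γ ∧
          (∀ x ∈ Γ, ∃ ν : ProbabilityMeasure M, ν ∈ U ∧ (ν : Measure M) = empMeasure f n x) ∧
          Real.exp (n * c) ≤ Γ.card := by
    intro c hc
    simp only [measEntropy, lt_iSup_iff] at hc
    obtain ⟨P, hP, hcP⟩ := hc
    exact exists_large_sep herg hP (EReal.coe_lt_coe_iff.1 hcP)
  by_cases htop : measEntropy f (μ : Measure M) = ⊤
  · obtain ⟨ε, hε, h⟩ := key (1 / κ + 1) (by rw [htop]; exact EReal.coe_lt_top _)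
    refine ⟨ε, hε, fun U hU => ?_⟩
    obtain ⟨N, hN⟩ := h U hU
    refine ⟨N, fun n hn => ?_⟩
    obtain ⟨Γ, h1, h2, h3, h4⟩ := hN n hn
    refine ⟨Γ, h1, h2, h3, fun h => absurd htop h, fun _ => ?_⟩
    have hnpos : (0 : ℝ) < n := by exact_mod_cast (Nat.zero_le N).trans_lt hn
    have h5 := Real.log_le_log (Real.exp_pos _) h4
    rw [Real.log_exp] at h5
    rw [lt_div_iff₀ hnpos]
    linarith
  · set e : ℝ := (measEntropy f (μ : Measure M)).toReal with he
    have hbot : measEntropy f (μ : Measure M) ≠ ⊥ := (lt_of_lt_of_le EReal.bot_lt_zero h0).ne'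
    have hcoe : ((e : ℝ) : EReal) = measEntropy f (μ : Measure M) :=
      EReal.coe_toReal htop hbot
    have he0 : 0 ≤ e := EReal.toReal_nonneg h0
    obtain ⟨ε, hε, h⟩ := key (e - κ / 2) (by
      rw [← hcoe, EReal.coe_lt_coe_iff]; linarith)
    refine ⟨ε, hε, fun U hU => ?_⟩
    obtain ⟨N, hN⟩ := h U hU
    obtain ⟨N', hN'⟩ := eventually_atTop.1
      ((tendsto_const_div_atTop_nhds_zero_nat (Real.log 2)).eventually
        (gt_mem_nhds (half_pos hκ)))
    refine ⟨max N N', fun n hn => ?_⟩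
    obtain ⟨Γ, h1, h2, h3, h4⟩ := hN n ((le_max_left _ _).trans_lt hn)
    have hlog2 := hN' n ((le_max_right _ _).trans hn.le)
    have hnpos : (0 : ℝ) < n := by exact_mod_cast (Nat.zero_le _).trans_lt hn
    -- trim `Γ` to the least cardinality allowed by the lower bound
    obtain ⟨Γ', hsub, hcard⟩ := Finset.exists_subset_card_eq (Nat.ceil_le.2 h4)
    refine ⟨Γ', fun x hx => h1 (hsub hx), h2.mono (Finset.coe_subset.2 hsub),
      fun x hx => h3 x (hsub hx), fun _ => ?_, fun h => absurd h htop⟩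
    set a : ℝ := n * (e - κ / 2) with ha
    have hle : Real.exp a ≤ (Γ'.card : ℝ) := by rw [hcard]; exact Nat.le_ceil _
    have hlow : a ≤ Real.log Γ'.card := by
      have := Real.log_le_log (Real.exp_pos _) hle
      rwa [Real.log_exp] at this
    have hupp : Real.log Γ'.card ≤ max a 0 + Real.log 2 := by
      have h5 : (Γ'.card : ℝ) ≤ 2 * Real.exp (max a 0) := by
        have h6 := (Nat.ceil_lt_add_one (Real.exp_pos a).le).le
        have h7 : Real.exp a ≤ Real.exp (max a 0) := Real.exp_le_exp.2 (le_max_left _ _)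
        have h8 : 1 ≤ Real.exp (max a 0) := Real.one_le_exp (le_max_right _ _)
        rw [hcard]; linarith
      have h6 := Real.log_le_log ((Real.exp_pos a).trans_le hle) h5
      rw [Real.log_mul (by norm_num) (Real.exp_pos _).ne', Real.log_exp] at h6
      linarith
    rw [div_lt_iff₀ hnpos] at hlog2
    have hmax : max a 0 ≤ n * e := max_le (by rw [ha]; gcongr; linarith) (by positivity)
    rw [abs_lt]
    constructor
    · rw [lt_sub_iff_add_lt, lt_div_iff₀ hnpos]
      have : a = n * e - κ / 2 * n := by rw [ha]; ring
      nlinarith [mul_pos hκ hnpos]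
    · rw [sub_lt_iff_lt_add, div_lt_iff₀ hnpos]
      nlinarith [mul_pos hκ hnpos]
end

section
/- Let Σ be a subshift over a finite alphabet with topological entropy h > 0. Then there exists L such that for every l ≥ L there exists a word w = w_0 w_1 ⋯ w_{l−1} in the language of Σ of length l whose maximal self-overlap is less than l/4; that is, max( {0 < k < l : w_{l−k} ⋯ w_{l−1} = w_0 ⋯ w_{k−1}} ∪ {0} ) < l/4. -/
/-!
Let `p n` be the number of words of length `n` in the language of the subshift. Concatenation
gives `p (m + n) ≤ p m * p n`, so `log (p n) / n` converges to its infimum `h`. Two points of an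
`(n, ε)`-separated set differ on a window of length `n + c`, with `c` depending only on `ε`, so
separated sets have at most `p (n + c)` elements (`exists_sepCount_le`), and positive topological
entropy forces `h > 0` (`lim_log_wordSet_pos`).

A word of length `l` with a self-overlap of length `k ≥ l / 4` has period `l - k ≤ 3 l / 4`, hence
is determined by this period and its first `⌊3 l / 4⌋` letters. There are therefore at most
`l * p ⌊3 l / 4⌋` such words (`ncard_wordSet_le_of_overlap`). As `p l ≥ exp (h l)`, whereas
`p ⌊3 l / 4⌋ ≤ exp ((7/8) h l)` for large `l`, these do not exhaust the words of length `l`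
(`eventually_lt_ncard_wordSet`).
-/

open Filter MeasureTheory Set Topology
open scoped ENNReal NNReal

attribute [local instance] PiCountable.metricSpace

open EF

/-! ### Words of a subshift -/

/-- The restriction of a bi-infinite sequence to the coordinates `0, …, n - 1`. -/
def wordAt {A : Type*} (n : ℕ) (x : ℤ → A) : Fin n → A := fun i => x (i : ℕ)

/-- The words of length `n` read off points of `S` at the origin. When `S` is shift invariant
these are all the words of length `n` in the language of `S`. -/
def wordSet {A : Type*} (S : Set (ℤ → A)) (n : ℕ) : Set (Fin n → A) := wordAt n '' S

lemma shift_int_mem {A : Type*} {S : Set (ℤ → A)} (hS : fullShift A '' S = S) {x : ℤ → A}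
    (hx : x ∈ S) (a : ℤ) : (fun i => x (i + a)) ∈ S := by
  induction a using Int.induction_on with
  | zero => simpa using hx
  | succ n ih =>
    have h : fullShift A (fun i => x (i + n)) ∈ S := hS ▸ mem_image_of_mem _ ih
    convert h using 1
    funext i
    simp only [fullShift]
    congr 1
    ring
  | pred n ih =>
    rw [← hS] at ih
    obtain ⟨y, hy, hyx⟩ := ih
    convert hy using 1
    funext i
    have := congrFun hyx (i - 1)
    simp only [fullShift, sub_add_cancel] at this
    rw [this]
    congr 1
    ring

lemma ncard_wordSet_add_le {A : Type*} [Finite A] {S : Set (ℤ → A)}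
    (hS : fullShift A '' S = S) (m n : ℕ) :
    (wordSet S (m + n)).ncard ≤ (wordSet S m).ncard * (wordSet S n).ncard := by
  rw [← Set.ncard_prod]
  refine Set.ncard_le_ncard_of_injOn
    (fun w => (fun i => w (Fin.castAdd n i), fun i => w (Fin.natAdd m i))) ?_ ?_ (Set.toFinite _)
  · rintro _ ⟨x, hx, rfl⟩
    refine ⟨⟨x, hx, rfl⟩, ⟨_, shift_int_mem hS hx m, ?_⟩⟩
    funext i
    simp [wordAt, add_comm]
  · intro v _ w _ h
    simp only [Prod.mk.injEq] at h
    funext i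
    refine Fin.addCases (fun j => congrFun h.1 j) (fun j => congrFun h.2 j) i

lemma subadditive_log_wordSet {A : Type*} [Finite A] {S : Set (ℤ → A)}
    (hS : fullShift A '' S = S) :
    Subadditive fun n => Real.log (wordSet S n).ncard := by
  intro m n
  have h := ncard_wordSet_add_le hS m n
  rcases Nat.eq_zero_or_pos (wordSet S (m + n)).ncard with h0 | h0
  · simp only [h0, Nat.cast_zero, Real.log_zero]
    exact add_nonneg (Real.log_natCast_nonneg _) (Real.log_natCast_nonneg _)
  · have hpos := h0.trans_le h
    have h1 : (wordSet S m).ncard ≠ 0 := fun h => by simp [h] at hpos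
    have h2 : (wordSet S n).ncard ≠ 0 := fun h => by simp [h] at hpos
    rw [← Real.log_mul (by exact_mod_cast h1) (by exact_mod_cast h2)]
    exact Real.log_le_log (by exact_mod_cast h0) (by exact_mod_cast h)

lemma bddBelow_log_wordSet {A : Type*} (S : Set (ℤ → A)) :
    BddBelow (range fun n : ℕ => Real.log (wordSet S n).ncard / n) :=
  ⟨0, by
    rintro _ ⟨n, rfl⟩
    exact div_nonneg (Real.log_natCast_nonneg _) (Nat.cast_nonneg _)⟩

/-! ### Separated sets and word counts -/

lemma exists_window_dist_le {A : Type*} [MetricSpace A] {ε : ℝ} (hε : 0 < ε) :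
    ∃ N : ℕ, ∀ x y : ℤ → A, (∀ i : ℤ, -N ≤ i → i ≤ N → x i = y i) → dist x y ≤ ε := by
  have hsum : Summable fun i : ℤ => (2⁻¹ : ℝ) ^ Encodable.encode i := by
    simpa [one_div] using summable_geometric_two_encode (ι := ℤ)
  obtain ⟨s, hs⟩ := ((tendsto_tsum_compl_atTop_zero
    fun i : ℤ => (2⁻¹ : ℝ) ^ Encodable.encode i).eventually (gt_mem_nhds hε)).exists
  refine ⟨s.sup Int.natAbs, fun x y hxy => ?_⟩
  have hd := PiCountable.dist_summable x y
  change (∑' i, min ((2⁻¹ : ℝ) ^ Encodable.encode i) (dist (x i) (y i))) ≤ ε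
  rw [← hd.sum_add_tsum_compl (s := s), Finset.sum_eq_zero, zero_add]
  · refine le_trans ?_ hs.le
    exact (hd.subtype _).tsum_le_tsum (fun i => min_le_left _ _) (hsum.subtype _)
  · intro i hi
    have : i.natAbs ≤ s.sup Int.natAbs := Finset.le_sup (f := Int.natAbs) hi
    rw [hxy i (by omega) (by omega), dist_self]
    exact min_eq_right (by positivity)

lemma fullShift_iterate {A : Type*} (j : ℕ) (x : ℤ → A) (i : ℤ) :
    (fullShift A)^[j] x i = x (i + j) := by
  induction j generalizing x with
  | zero => simp
  | succ j ih =>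
    rw [Function.iterate_succ_apply, ih]
    simp only [fullShift]
    congr 1
    push_cast
    ring

/-- Points of an `(n, ε)`-separated set carry distinct words on the window `[-N, n + N]`, where
agreement on `[-N, N]` forces distance at most `ε`. -/
lemma exists_sepCount_le {A : Type*} [Finite A] [MetricSpace A] {S : Set (ℤ → A)}
    (hS : fullShift A '' S = S) {ε : ℝ} (hε : 0 < ε) :
    ∃ c : ℕ, ∀ n, sepCount (fullShift A) S n ε ≤ (wordSet S (n + c)).ncard := by
  obtain ⟨N, hN⟩ := exists_window_dist_le (A := A) hε
  refine ⟨2 * N + 1, fun n => csSup_le' ?_⟩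
  rintro _ ⟨Q, hQS, hQ, rfl⟩
  rw [← Set.ncard_coe_finset]
  refine Set.ncard_le_ncard_of_injOn (fun x => wordAt _ (fun i => x (i + (-N : ℤ)))) ?_ ?_
    (Set.toFinite _)
  · intro x hx
    exact ⟨_, shift_int_mem hS (hQS hx) _, rfl⟩
  · intro x hx y hy hxy
    by_contra hne
    obtain ⟨j, hj, hlt⟩ := hQ hx hy hne
    refine hlt.not_ge (hN _ _ fun i h1 h2 => ?_)
    rw [fullShift_iterate, fullShift_iterate]
    have := congrFun hxy ⟨(i + j + N).toNat, by omega⟩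
    simp only [wordAt] at this
    rw [Int.toNat_of_nonneg (by omega)] at this
    simpa using this

lemma lim_log_wordSet_pos {A : Type*} [Finite A] [MetricSpace A] {S : Set (ℤ → A)}
    (hS : fullShift A '' S = S) (hent : 0 < topEntropyOn (fullShift A) S) :
    0 < (subadditive_log_wordSet hS).lim := by
  set hu := subadditive_log_wordSet hS
  by_contra! hle
  refine hent.not_ge (iSup₂_le fun ε hε => ?_)
  obtain ⟨c, hc⟩ := exists_sepCount_le hS hε
  have hlim := hu.tendsto_lim (bddBelow_log_wordSet S)
  have hshift : Tendsto (fun n : ℕ => Real.log (wordSet S (n + c)).ncard / ((n + c : ℕ) : ℝ) *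
      (((n : ℝ) + c) / n)) atTop (𝓝 (hu.lim * 1)) := by
    refine (hlim.comp (tendsto_add_atTop_nat c)).mul ?_
    have : Tendsto (fun n : ℕ => 1 + (c : ℝ) / n) atTop (𝓝 (1 + 0)) :=
      tendsto_const_nhds.add (tendsto_const_div_atTop_nhds_zero_nat _)
    rw [add_zero] at this
    refine this.congr' ?_
    filter_upwards [eventually_gt_atTop 0] with n hn
    have : (n : ℝ) ≠ 0 := by positivity
    field_simp
  have hE : Tendsto (fun n : ℕ => ((Real.log (wordSet S (n + c)).ncard / ((n + c : ℕ) : ℝ) *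
      (((n : ℝ) + c) / n) : ℝ) : EReal)) atTop (𝓝 ((hu.lim * 1 : ℝ) : EReal)) :=
    (continuous_coe_real_ereal.tendsto _).comp hshift
  calc _ ≤ atTop.limsup fun n : ℕ => ((Real.log (wordSet S (n + c)).ncard / ((n + c : ℕ) : ℝ) *
      (((n : ℝ) + c) / n) : ℝ) : EReal) := by
        refine limsup_le_limsup ?_
        filter_upwards [eventually_gt_atTop 0] with n hn
        rw [EReal.coe_le_coe_iff]
        have h1 : (n : ℝ) ≠ 0 := by positivity
        have h2 : (n : ℝ) + c ≠ 0 := by positivity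
        have h3 : Real.log (sepCount (fullShift A) S n ε) ≤
            Real.log (wordSet S (n + c)).ncard := by
          rcases Nat.eq_zero_or_pos (sepCount (fullShift A) S n ε) with h0 | h0
          · simpa [h0] using Real.log_natCast_nonneg _
          · exact Real.log_le_log (by exact_mod_cast h0) (by exact_mod_cast hc n)
        rw [Nat.cast_add, div_mul_div_cancel₀ h2]
        gcongr
    _ = ((hu.lim * 1 : ℝ) : EReal) := hE.limsup_eq
    _ ≤ 0 := by
        rw [mul_one]
        exact_mod_cast hle

/-! ### Counting words with a long self-overlap -/

/-- A word of length `l` with a self-overlap of length `k ≥ l / 4` has period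
`d = l - k ≤ 3 * l / 4`, so it is determined by `d` and its first `3 * l / 4` letters. -/
lemma ncard_wordSet_le_of_overlap {A : Type*} [Finite A] {S : Set (ℤ → A)} {l : ℕ}
    (h : ∀ x ∈ S, ∃ k : ℕ, 0 < k ∧ k < l ∧
      (∀ j : ℕ, j < k → x ((l - k + j : ℕ) : ℤ) = x (j : ℤ)) ∧ l ≤ 4 * k) :
    (wordSet S l).ncard ≤ l * (wordSet S (3 * l / 4)).ncard := by
  have hml : 3 * l / 4 ≤ l := by omega
  have hper : ∀ w ∈ wordSet S l, ∃ d : ℕ, 0 < d ∧ d < l ∧ d ≤ 3 * l / 4 ∧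
      ∀ (i : ℕ) (hi : i < l), d ≤ i → w ⟨i, hi⟩ = w ⟨i - d, by omega⟩ := by
    rintro _ ⟨x, hx, rfl⟩
    obtain ⟨k, hk0, hkl, hk, hlk⟩ := h x hx
    refine ⟨l - k, by omega, by omega, by omega, fun i hi hdi => ?_⟩
    have := hk (i - (l - k)) (by omega)
    rwa [show l - k + (i - (l - k)) = i by omega] at this
  choose! d hd0 hdl hdm hd using hper
  have hcard : l * (wordSet S (3 * l / 4)).ncard =
      (((Finset.range l : Finset ℕ) : Set ℕ) ×ˢ wordSet S (3 * l / 4)).ncard := by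
    rw [Set.ncard_prod, Set.ncard_coe_finset, Finset.card_range]
  rw [hcard]
  refine Set.ncard_le_ncard_of_injOn (fun w => (d w, fun i => w (Fin.castLE hml i))) ?_ ?_
    (Set.toFinite _)
  · intro w hw
    refine ⟨by simpa using hdl w hw, ?_⟩
    obtain ⟨x, hx, rfl⟩ := hw
    exact ⟨x, hx, rfl⟩
  · intro v hv w hw hvw
    simp only [Prod.mk.injEq] at hvw
    have key : ∀ (i : ℕ) (hi : i < l), v ⟨i, hi⟩ = w ⟨i, hi⟩ := by
      intro i
      induction i using Nat.strong_induction_on with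
      | _ i ih =>
        intro hi
        by_cases him : i < 3 * l / 4
        · exact congrFun hvw.2 ⟨i, him⟩
        · have h1 := hd0 v hv
          have h2 := hdm v hv
          rw [hd v hv i hi (by omega), hd w hw i hi (by omega), ih _ (by omega)]
          simp only [hvw.1]
    funext i
    exact key i i.2

/-- With `h` the exponential growth rate of the word count, `exp (h l)` words of length `l`
cannot be covered by `l * exp ((7/6) h (3 l / 4))` of them once `l` is large. -/
lemma eventually_lt_ncard_wordSet {A : Type*} [Finite A] {S : Set (ℤ → A)}
    (hS : fullShift A '' S = S) (hpos : 0 < (subadditive_log_wordSet hS).lim) :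
    ∀ᶠ l : ℕ in atTop, l * (wordSet S (3 * l / 4)).ncard < (wordSet S l).ncard := by
  set hu := subadditive_log_wordSet hS
  set H := hu.lim
  have hlim := hu.tendsto_lim (bddBelow_log_wordSet S)
  have hm : Tendsto (fun l : ℕ => 3 * l / 4) atTop atTop :=
    tendsto_atTop_mono (fun l => by omega) (Nat.tendsto_div_const_atTop (n := 4) (by norm_num))
  have hup := hm.eventually
    (hlim.eventually (gt_mem_nhds (show H < 7 / 6 * H by linarith)))
  have hlog : ∀ᶠ l : ℕ in atTop, Real.log l ≤ H / 16 * l := by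
    have := (Real.isLittleO_log_id_atTop.comp_tendsto tendsto_natCast_atTop_atTop).bound
      (show 0 < H / 16 by positivity)
    filter_upwards [this] with l hl
    simp only [Function.comp, id, Real.norm_eq_abs, Nat.abs_cast] at hl
    exact (le_abs_self _).trans hl
  filter_upwards [hup, hlog, eventually_ge_atTop 4] with l h1 h2 h4
  by_contra! hle
  have hlow := hu.lim_le_div (bddBelow_log_wordSet S) (n := l) (by omega)
  have hl : (0 : ℝ) < l := by
    exact_mod_cast (show 0 < l by omega)
  have hmpos : (0 : ℝ) < (3 * l / 4 : ℕ) := by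
    exact_mod_cast (show 0 < 3 * l / 4 by omega)
  have hm4 : ((3 * l / 4 : ℕ) : ℝ) ≤ 3 * l / 4 := by
    have : (4 * (3 * l / 4 : ℕ) : ℝ) ≤ 3 * l := by
      exact_mod_cast (show 4 * (3 * l / 4) ≤ 3 * l by omega)
    linarith
  rw [le_div_iff₀ hl] at hlow
  rw [div_lt_iff₀ hmpos] at h1
  change H * l ≤ Real.log (wordSet S l).ncard at hlow
  have hHl : 0 < H * l := mul_pos hpos hl
  have hp : 0 < (wordSet S l).ncard := by
    refine Nat.pos_of_ne_zero fun h0 => ?_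
    rw [h0, Nat.cast_zero, Real.log_zero] at hlow
    linarith
  have hq : (wordSet S (3 * l / 4)).ncard ≠ 0 := fun h0 => by
    simp [h0] at hle
    omega
  have hmain : Real.log (wordSet S l).ncard ≤
      Real.log l + Real.log (wordSet S (3 * l / 4)).ncard := by
    rw [← Real.log_mul hl.ne' (by exact_mod_cast hq)]
    exact Real.log_le_log (by exact_mod_cast hp) (by exact_mod_cast hle)
  have h5 : 7 / 6 * H * ((3 * l / 4 : ℕ) : ℝ) ≤ 7 / 6 * H * (3 * l / 4) := by gcongr
  linarith

/-- In a subshift of positive topological entropy, every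
sufficiently long length admits a word in the language whose maximal self-overlap
is less than a quarter of its length. -/
theorem exists_word_without_large_self_overlap
    {A : Type*} [Fintype A] [MetricSpace A]
    (S : Set (ℤ → A)) (hS : IsSubshift S)
    (hent : 0 < topEntropyOn (fullShift A) S) :
    ∃ L : ℕ, ∀ l : ℕ, L ≤ l →
      ∃ w : ℕ → A,
        (∃ x ∈ S, ∀ i : ℕ, i < l → x (i : ℤ) = w i) ∧
        (0 : ℝ) < (l : ℝ) / 4 ∧
        ∀ k : ℕ, 0 < k → k < l → (∀ j : ℕ, j < k → w (l - k + j) = w j) →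
          (k : ℝ) < (l : ℝ) / 4 := by
  obtain ⟨L, hL⟩ := eventually_atTop.1
    (eventually_lt_ncard_wordSet hS.2 (lim_log_wordSet_pos hS.2 hent))
  refine ⟨max L 1, fun l hl => ?_⟩
  have hl0 : (0 : ℝ) < l := by
    exact_mod_cast (show 0 < l by omega)
  by_contra! hcon
  refine (hL l (by omega)).not_ge (ncard_wordSet_le_of_overlap fun x hx => ?_)
  obtain ⟨k, hk0, hkl, hk, hlk⟩ :=
    hcon (fun i => x (i : ℤ)) ⟨x, hx, fun _ _ => rfl⟩ (by positivity)
  refine ⟨k, hk0, hkl, hk, ?_⟩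
  have : (l : ℝ) ≤ 4 * k := by linarith
  exact_mod_cast this
end

section
/- Every uniquely decipherable renewal shift over a finite set of words is a shift of finite type. That is, if 𝒲 is a finite set of finite words over a finite alphabet and Σ is the renewal shift consisting of all bi-infinite free concatenations of words in 𝒲 (and their shifts), and if every x ∈ Σ admits a unique way of being written as a bi-infinite concatenation of words from 𝒲, then Σ is a shift of finite type. -/
/-!
A point of the renewal shift together with a parsing is the same thing as a bi-infinite path in
the finite graph whose vertices are the pairs (word `w ∈ W`, position `k < |w|`), with edges
`(w, k) → (w, k + 1)` inside a word and `(w, |w| - 1) → (w', 0)` from the end of a word to the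
beginning of any word. Reading off letters is a continuous shift-commuting map from the vertex
shift of this graph to the full shift over `A`. Its image is the renewal shift
(`Coding.read_mem`, `Coding.exists_path`), and it is injective because, by unique
decipherability, the letters determine the cutting points and hence the whole path
(`Coding.read_injective`). The vertex shift is compact, so its image is closed, and a continuous
bijection from a compact space to a Hausdorff space is a homeomorphism.
-/

open Filter MeasureTheory Set Topology
open scoped ENNReal NNReal

attribute [local instance] PiCountable.metricSpace

open EF

/-! ### The graph of positions in words -/

namespace EF

/-- A type `B` labelling the pairs (word of `W`, position in that word) bijectively: `word` and
`pos` are the two components of a label. Labels are abstract so that `B` can be taken in `Type`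
whatever the universe of `A`. -/
structure Coding {A : Type*} (W : Finset (List A)) (B : Type*) where
  /-- The word component of a label. -/
  word : B → List A
  /-- The position component of a label. -/
  pos : B → ℕ
  pos_lt : ∀ b, pos b < (word b).length
  word_mem : ∀ b, word b ∈ W
  ext_label : ∀ b b', word b = word b' → pos b = pos b' → b = b'
  exists_label : ∀ w ∈ W, ∀ k, k < w.length → ∃ b, word b = w ∧ pos b = k

namespace Coding

variable {A : Type*} {W : Finset (List A)} {B : Type*} (C : Coding W B)

/-- The edges of the graph: advance inside the word, or pass from the last position of a word to
the first position of an arbitrary word. -/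
def Adj (p q : B) : Prop :=
  (C.word q = C.word p ∧ C.pos q = C.pos p + 1) ∨
    (C.pos p + 1 = (C.word p).length ∧ C.pos q = 0)

/-- The letter of `A` displayed by a label. -/
def letter (b : B) : A := (C.word b)[C.pos b]'(C.pos_lt b)

/-- The sequence of letters along a sequence of labels. -/
def read (y : ℤ → B) : ℤ → A := fun i => C.letter (y i)

/-- `r` enumerates consecutive word beginnings along the path `y`. -/
def Cuts (y : ℤ → B) (r : ℤ → ℤ) : Prop :=
  ∀ j, C.pos (y (r j)) = 0 ∧ r (j + 1) = r j + (C.word (y (r j))).length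

variable {C}

lemma forward {y : ℤ → B} (hy : y ∈ vertexShift C.Adj) (i : ℤ) (k : ℕ)
    (hk : C.pos (y i) + k < (C.word (y i)).length) :
    C.word (y (i + k)) = C.word (y i) ∧ C.pos (y (i + k)) = C.pos (y i) + k := by
  induction k with
  | zero => simp
  | succ k ih =>
    obtain ⟨h1, h2⟩ := ih (by omega)
    have h := hy (i + k)
    have e : i + (k : ℤ) + 1 = i + ((k + 1 : ℕ) : ℤ) := by push_cast; ring
    rw [e] at h
    rcases h with ⟨h3, h4⟩ | ⟨h3, h4⟩
    · exact ⟨h3.trans h1, by omega⟩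
    · rw [h1] at h3; omega

lemma backward {y : ℤ → B} (hy : y ∈ vertexShift C.Adj) (i : ℤ) (k : ℕ)
    (hk : k ≤ C.pos (y i)) :
    C.word (y (i - k)) = C.word (y i) ∧ C.pos (y (i - k)) + k = C.pos (y i) := by
  induction k with
  | zero => simp
  | succ k ih =>
    obtain ⟨h1, h2⟩ := ih (by omega)
    have h := hy (i - (k + 1 : ℕ))
    have e : i - ((k + 1 : ℕ) : ℤ) + 1 = i - (k : ℤ) := by push_cast; ring
    rw [e] at h
    rcases h with ⟨h3, h4⟩ | ⟨h3, h4⟩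
    · exact ⟨h3.symm.trans h1, by omega⟩
    · omega

lemma pos_next {y : ℤ → B} (hy : y ∈ vertexShift C.Adj) {i : ℤ} (hi : C.pos (y i) = 0) :
    C.pos (y (i + (C.word (y i)).length)) = 0 := by
  have hl := C.pos_lt (y i)
  obtain ⟨h1, h2⟩ := forward hy i ((C.word (y i)).length - 1) (by omega)
  have h := hy (i + ((C.word (y i)).length - 1 : ℕ))
  have e : i + (((C.word (y i)).length - 1 : ℕ) : ℤ) + 1 = i + (C.word (y i)).length := by omega
  rw [e] at h
  rcases h with ⟨h3, h4⟩ | ⟨h3, h4⟩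
  · have h5 := C.pos_lt (y (i + (C.word (y i)).length))
    rw [h3, h1] at h5
    omega
  · exact h4

lemma pos_prev {y : ℤ → B} (hy : y ∈ vertexShift C.Adj) {i : ℤ} (hi : C.pos (y i) = 0) :
    C.pos (y (i - (C.word (y (i - 1))).length)) = 0 ∧
      C.word (y (i - (C.word (y (i - 1))).length)) = C.word (y (i - 1)) := by
  have h := hy (i - 1)
  rw [sub_add_cancel] at h
  rcases h with ⟨h3, h4⟩ | ⟨h3, h4⟩
  · omega
  · obtain ⟨h1, h2⟩ := backward hy (i - 1) (C.pos (y (i - 1))) le_rfl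
    have e : i - 1 - (C.pos (y (i - 1)) : ℤ) = i - (C.word (y (i - 1))).length := by omega
    rw [e] at h1 h2
    exact ⟨by omega, h1⟩

/-- Passing from one word beginning to the next is a permutation of the set of word beginnings
of a path. -/
def next {y : ℤ → B} (hy : y ∈ vertexShift C.Adj) : Equiv.Perm {i : ℤ // C.pos (y i) = 0} where
  toFun i := ⟨i.1 + (C.word (y i)).length, pos_next hy i.2⟩
  invFun i := ⟨i.1 - (C.word (y (i.1 - 1))).length, (pos_prev hy i.2).1⟩
  left_inv := by
    rintro ⟨i, hi⟩
    have hl := C.pos_lt (y i)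
    obtain ⟨h1, -⟩ := forward hy i ((C.word (y i)).length - 1) (by omega)
    have e : i + (((C.word (y i)).length - 1 : ℕ) : ℤ) = i + (C.word (y i)).length - 1 := by omega
    rw [e] at h1
    simp [h1]
  right_inv := by
    rintro ⟨i, hi⟩
    simp [(pos_prev hy hi).2]

/-- Every path has a sequence of cuts, the orbit of one word beginning under `next`. -/
lemma exists_cuts {y : ℤ → B} (hy : y ∈ vertexShift C.Adj) : ∃ r, C.Cuts y r := by
  have h0 : C.pos (y (0 - (C.pos (y 0) : ℤ))) = 0 := by
    have := (backward hy 0 (C.pos (y 0)) le_rfl).2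
    omega
  refine ⟨fun j => ((next hy ^ j) ⟨_, h0⟩ : {i : ℤ // C.pos (y i) = 0}).1,
    fun j => ⟨((next hy ^ j) ⟨_, h0⟩).2, ?_⟩⟩
  simp only [add_comm j 1, zpow_one_add, Equiv.Perm.mul_apply]
  rfl

lemma Cuts.apply_add {y : ℤ → B} {r : ℤ → ℤ} (hr : C.Cuts y r) (hy : y ∈ vertexShift C.Adj)
    (j : ℤ) (k : ℕ) (hk : k < (C.word (y (r j))).length) :
    C.word (y (r j + k)) = C.word (y (r j)) ∧ C.pos (y (r j + k)) = k := by
  have h := forward hy (r j) k (by rw [(hr j).1]; omega)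
  rw [(hr j).1, zero_add] at h
  exact h

lemma Cuts.parsesAt {y : ℤ → B} {r : ℤ → ℤ} (hr : C.Cuts y r) (hy : y ∈ vertexShift C.Adj) :
    ParsesAt (C.read y) W r := by
  intro j
  refine ⟨C.word (y (r j)), C.word_mem _, (hr j).2, fun i => ?_⟩
  obtain ⟨h1, h2⟩ := hr.apply_add hy j i i.2
  simp only [read, letter, h1, h2, List.get_eq_getElem]

lemma read_mem {y : ℤ → B} (hy : y ∈ vertexShift C.Adj) : C.read y ∈ renewalSet W :=
  let ⟨r, hr⟩ := exists_cuts hy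
  ⟨r, hr.parsesAt hy⟩

end Coding

/-! ### Parsings -/

section Parsing

variable {A : Type*} {W : Finset (List A)} {x : ℤ → A} {r : ℤ → ℤ}

lemma ParsesAt.lt_succ (hW : ∀ w ∈ W, w ≠ []) (hr : ParsesAt x W r) (j : ℤ) :
    r j < r (j + 1) := by
  obtain ⟨w, hw, h, -⟩ := hr j
  have := List.length_pos_iff.2 (hW w hw)
  omega

lemma ParsesAt.strictMono (hW : ∀ w ∈ W, w ≠ []) (hr : ParsesAt x W r) : StrictMono r :=
  strictMono_int_of_lt_succ (hr.lt_succ hW)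

/-- Since no word is empty, the cuts are unbounded in both directions, so every coordinate lies
in one of the words. -/
lemma ParsesAt.exists_block (hW : ∀ w ∈ W, w ≠ []) (hr : ParsesAt x W r) (i : ℤ) :
    ∃ j, r j ≤ i ∧ i < r (j + 1) := by
  have up : ∀ (a : ℤ) (n : ℕ), r a + n ≤ r (a + n) := by
    intro a n
    induction n with
    | zero => simp
    | succ n ih =>
      have := hr.lt_succ hW (a + n)
      push_cast
      rw [← add_assoc a]
      omega
  obtain ⟨j, hj, hmax⟩ := Int.exists_greatest_of_bdd (P := fun j => r j ≤ i)
    ⟨|i - r 0|, fun z hz => by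
      by_contra hlt
      have hz0 : 0 ≤ z := (abs_nonneg _).trans (not_le.1 hlt).le
      have h1 := up 0 z.toNat
      have h2 := le_abs_self (i - r 0)
      rw [Int.toNat_of_nonneg hz0, zero_add] at h1
      omega⟩
    ⟨-|i - r 0|, by
      have h1 := up (-|i - r 0|) (|i - r 0|).toNat
      have h2 := neg_abs_le (i - r 0)
      rw [Int.toNat_of_nonneg (abs_nonneg _), neg_add_cancel] at h1
      omega⟩
  refine ⟨j, hj, ?_⟩
  by_contra h
  have := hmax (j + 1) (not_lt.1 h)
  omega

lemma ParsesAt.shift (hr : ParsesAt x W r) (c : ℤ) :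
    ParsesAt (fun i => x (i + c)) W (fun j => r j - c) := by
  intro j
  obtain ⟨w, hw, h1, h2⟩ := hr j
  refine ⟨w, hw, by simp only [h1]; ring, fun i => ?_⟩
  rw [← h2 i]
  exact congrArg x (by ring)

lemma image_fullShift_renewalSet : fullShift A '' renewalSet W = renewalSet W := by
  ext x
  constructor
  · rintro ⟨z, ⟨r, hr⟩, rfl⟩
    exact ⟨_, hr.shift 1⟩
  · rintro ⟨r, hr⟩
    refine ⟨fun i => x (i + -1), ⟨_, hr.shift (-1)⟩, ?_⟩
    funext i
    simp [fullShift]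

end Parsing

/-! ### Reading paths is a bijection onto the renewal shift -/

namespace Coding

variable {A : Type*} {W : Finset (List A)} {B : Type*} {C : Coding W B}

/-- Every parsed sequence is read off from a path. -/
lemma exists_path (hW : ∀ w ∈ W, w ≠ []) {x : ℤ → A} (hx : x ∈ renewalSet W) :
    ∃ y ∈ vertexShift C.Adj, C.read y = x := by
  obtain ⟨r, hr⟩ := hx
  choose w hwW hlen hget using hr
  have hr : ParsesAt x W r := fun j => ⟨w j, hwW j, hlen j, hget j⟩
  choose b hb1 hb2 using hr.exists_block hW
  have hlt : ∀ i, (i - r (b i)).toNat < (w (b i)).length := by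
    intro i
    have := hb1 i
    have := hb2 i
    have := hlen (b i)
    omega
  choose y hy1 hy2 using fun i => C.exists_label (w (b i)) (hwW _) _ (hlt i)
  have huniq : ∀ i j, r j ≤ i → i < r (j + 1) → b i = j := by
    intro i j h1 h2
    have h3 := (hr.strictMono hW).lt_iff_lt.1 ((hb1 i).trans_lt h2)
    have h4 := (hr.strictMono hW).lt_iff_lt.1 (h1.trans_lt (hb2 i))
    omega
  refine ⟨y, fun i => ?_, ?_⟩
  · have h1 := hb1 i
    have h2 := hb2 i
    have h3 := hlen (b i)
    rcases lt_or_ge (i + 1) (r (b i + 1)) with h | h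
    · have e := huniq (i + 1) (b i) (by omega) h
      left
      rw [hy1, hy1, hy2, hy2, e]
      exact ⟨rfl, by omega⟩
    · have e := huniq (i + 1) (b i + 1) h (by have := hr.lt_succ hW (b i + 1); omega)
      right
      rw [hy1, hy2, hy2, e]
      exact ⟨by omega, by omega⟩
  · funext i
    have h := hget (b i) ⟨_, hlt i⟩
    have e : r (b i) + (((i - r (b i)).toNat : ℕ) : ℤ) = i := by have := hb1 i; omega
    simp only [e] at h
    simp only [read, letter, hy1, hy2, h, List.get_eq_getElem]

/-- Two paths with the same letters have, by unique decipherability, the same cutting points;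
a block between two consecutive cuts then determines its word, hence its labels. -/
lemma read_injective (hW : ∀ w ∈ W, w ≠ [])
    (hud : ∀ x ∈ renewalSet W, ∀ r r' : ℤ → ℤ, ParsesAt x W r → ParsesAt x W r' →
      ∃ m : ℤ, ∀ j : ℤ, r' j = r (j + m))
    {y y' : ℤ → B} (hy : y ∈ vertexShift C.Adj) (hy' : y' ∈ vertexShift C.Adj)
    (h : C.read y = C.read y') : y = y' := by
  obtain ⟨r, hr⟩ := exists_cuts hy
  obtain ⟨r', hr'⟩ := exists_cuts hy'
  have hp := hr.parsesAt hy
  obtain ⟨m, hm⟩ := hud _ ⟨r, hp⟩ r r' hp (h ▸ hr'.parsesAt hy')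
  funext i
  obtain ⟨j, hj1, hj2⟩ := (hr'.parsesAt hy').exists_block hW i
  obtain ⟨k, rfl⟩ := Int.le.dest hj1
  have hs : r (j + m) = r' j := (hm j).symm
  have hs' : r (j + m + 1) = r' (j + 1) := by rw [hm]; congr 1; ring
  have hl := (hr (j + m)).2
  have hl' := (hr' j).2
  have hlen : (C.word (y (r' j))).length = (C.word (y' (r' j))).length := by
    rw [hs, hs'] at hl
    omega
  have key : ∀ k : ℕ, k < (C.word (y' (r' j))).length →
      C.word (y (r' j + k)) = C.word (y (r' j)) ∧ C.pos (y (r' j + k)) = k := by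
    intro k hk
    have := hr.apply_add hy (j + m) k
    rw [hs] at this
    exact this (by omega)
  have hword : C.word (y (r' j)) = C.word (y' (r' j)) := by
    refine List.ext_getElem hlen fun n h1 h2 => ?_
    obtain ⟨a1, a2⟩ := key n h2
    obtain ⟨b1, b2⟩ := hr'.apply_add hy' j n h2
    have := congrFun h (r' j + n)
    simpa only [read, letter, a1, a2, b1, b2] using this
  have hk : k < (C.word (y' (r' j))).length := by omega
  obtain ⟨a1, a2⟩ := key k hk
  obtain ⟨b1, b2⟩ := hr'.apply_add hy' j k hk
  exact C.ext_label _ _ (by rw [a1, b1, hword]) (by rw [a2, b2])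

end Coding

/-! ### The conjugacy -/

/-- The positions in the words of `W` can be labelled by an initial segment of `ℕ`. -/
lemma exists_coding {A : Type*} (W : Finset (List A)) : ∃ n, Nonempty (Coding W (Fin n)) := by
  let e := Fintype.equivFin (Σ w : W, Fin w.1.length)
  refine ⟨_, ⟨fun b => (e.symm b).1.1, fun b => (e.symm b).2, fun b => (e.symm b).2.2,
    fun b => (e.symm b).1.2, fun b b' h1 h2 => ?_, fun w hw k hk => ?_⟩⟩
  · apply e.symm.injective
    generalize e.symm b = p at *
    generalize e.symm b' = q at *
    obtain ⟨⟨w, hw⟩, i⟩ := p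
    obtain ⟨⟨w', hw'⟩, i'⟩ := q
    obtain rfl : w = w' := h1
    obtain rfl : i = i' := Fin.ext h2
    rfl
  · exact ⟨e ⟨⟨w, hw⟩, ⟨k, hk⟩⟩, by simp, by rw [e.symm_apply_apply]⟩

lemma isClosed_vertexShift {B : Type*} [TopologicalSpace B] [DiscreteTopology B]
    (R : B → B → Prop) : IsClosed (vertexShift R) := by
  have : vertexShift R = ⋂ i : ℤ, (fun y : ℤ → B => (y i, y (i + 1))) ⁻¹' {p | R p.1 p.2} := by
    ext y
    simp [vertexShift]
  rw [this]
  exact isClosed_iInter fun i => (isClosed_discrete _).preimage (by fun_prop)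

lemma Coding.isSFT {A : Type*} [Fintype A] [MetricSpace A] {W : Finset (List A)}
    {B : Type} [Fintype B] [MetricSpace B] (C : Coding W B) (hW : ∀ w ∈ W, w ≠ [])
    (hud : ∀ x ∈ renewalSet W, ∀ r r' : ℤ → ℤ, ParsesAt x W r → ParsesAt x W r' →
      ∃ m : ℤ, ∀ j : ℤ, r' j = r (j + m)) :
    IsSFT (renewalSet W) := by
  have hcont : Continuous C.read :=
    continuous_pi fun i => continuous_of_discreteTopology.comp (continuous_apply i)
  have hcpt : IsCompact (vertexShift C.Adj) := (isClosed_vertexShift C.Adj).isCompact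
  have himg : C.read '' vertexShift C.Adj = renewalSet W := by
    ext x
    constructor
    · rintro ⟨y, hy, rfl⟩
      exact Coding.read_mem hy
    · exact Coding.exists_path hW
  refine ⟨⟨himg ▸ (hcpt.image hcont).isClosed, image_fullShift_renewalSet⟩, ?_⟩
  have : CompactSpace (vertexShift C.Adj) := isCompact_iff_compactSpace.1 hcpt
  let f : vertexShift C.Adj → renewalSet W := fun y => ⟨C.read y, Coding.read_mem y.2⟩
  have hinj : Function.Injective f := fun y y' h =>
    Subtype.ext (Coding.read_injective hW hud y.2 y'.2 (congrArg Subtype.val h))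
  have hsurj : Function.Surjective f := fun x => by
    obtain ⟨y, hy, h⟩ := Coding.exists_path (C := C) hW x.2
    exact ⟨⟨y, hy⟩, Subtype.ext h⟩
  have hf : Continuous f := (hcont.comp continuous_subtype_val).subtype_mk _
  let g : vertexShift C.Adj ≃ₜ renewalSet W :=
    Continuous.homeoOfEquivCompactToT2 (f := Equiv.ofBijective f ⟨hinj, hsurj⟩) hf
  refine ⟨B, inferInstance, inferInstance, C.Adj, g.symm, fun x z hz => ?_⟩
  have hread : ∀ u : renewalSet W, C.read (g.symm u).1 = u.1 := fun u =>
    congrArg Subtype.val (g.apply_symm_apply u)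
  -- Both paths display the letters of `z`, so injectivity of reading identifies them.
  refine Coding.read_injective (C := C) hW hud (g.symm z).2 (fun i => (g.symm x).2 (i + 1)) ?_
  rw [hread, hz, ← hread x]
  rfl

end EF

/-- Every uniquely decipherable renewal shift over a finite set of
(nonempty) words is a shift of finite type. -/
theorem uniquely_decipherable_renewal_is_SFT
    {A : Type*} [Fintype A] [MetricSpace A]
    (W : Finset (List A)) (hW : ∀ w ∈ W, w ≠ [])
    (hud : ∀ x ∈ renewalSet W, ∀ r r' : ℤ → ℤ, ParsesAt x W r → ParsesAt x W r' →
      ∃ m : ℤ, ∀ j : ℤ, r' j = r (j + m)) :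
    IsSFT (renewalSet W) := by
  obtain ⟨n, ⟨C⟩⟩ := exists_coding W
  let _ : MetricSpace (Fin n) := MetricSpace.induced Fin.val Fin.val_injective inferInstance
  exact C.isSFT hW hud
end

section
/- A subshift over a finite alphabet is a shift of finite type if and only if the shift map restricted to it has the shadowing property. -/
/-!
Over a finite alphabet, two bi-infinite sequences are close exactly when they agree on a large
central window (`exists_agree_of_dist_le`, `exists_dist_le_of_agree`). Hence a pseudo-orbit of
the shift is a sequence of points whose windows overlap compatibly, and the combinatorial
`window_eq_center` says that such windows are all pieces of the sequence of central symbols.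

If `h` conjugates `S` to a vertex shift, then `h` and its inverse are uniformly continuous by
compactness. For a sufficiently fine pseudo-orbit `x` in `S`, the windows of the points `h (x n)`
overlap compatibly, so the central symbols `b n = h (x n) 0` form a point of the vertex
shift, because membership there is a condition on pairs of neighbours only. The translates of
`b` are close to the `h (x n)`, so the orbit of `h⁻¹ b` shadows `x` (`shadowing_of_SFT`).

Conversely, assume shadowing, with `δ` so small that `δ`-pseudo-orbits are shadowed with the
correct symbol at coordinate `0`, and let `N` be a radius for which agreement on `[-N, N]`
implies `δ`-closeness. Recode `S` by its words on `[-(N+1), N+1]`. A sequence of compatibly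
overlapping words of `S` extends to a `δ`-pseudo-orbit in `S`, and the shadowing orbit shows that
the glued sequence lies in `S`. So the recoding is a conjugacy onto a vertex shift
(`SFT_of_shadowing`).
-/

open Filter MeasureTheory Set Topology
open scoped ENNReal NNReal

attribute [local instance] PiCountable.metricSpace

open EF

/-! ### Closeness of sequences over a finite alphabet -/

/-- Over a finite alphabet, close sequences agree on a prescribed central window. -/
lemma exists_agree_of_dist_le (A : Type*) [Fintype A] [MetricSpace A] (P : ℤ) :
    ∃ δ : ℝ, 0 < δ ∧ ∀ x y : ℤ → A, dist x y ≤ δ → ∀ j : ℤ, |j| ≤ P → x j = y j := by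
  -- `r` is a lower bound for the distances between distinct letters.
  obtain ⟨r, hr, hsep⟩ : ∃ r : ℝ, 0 < r ∧ ∀ a b : A, dist a b < r → a = b := by
    have hball : ∀ a : A, ∃ r : ℝ, 0 < r ∧ Metric.ball a r ⊆ {a} := fun a =>
      Metric.isOpen_iff.1 (isOpen_discrete {a}) a rfl
    choose ρ hρ hball using hball
    obtain ⟨r, hr, hlt⟩ := Pi.exists_forall_pos_add_lt hρ
    exact ⟨r, hr, fun a b hab => hball b (hab.trans (by simpa using hlt b))⟩
  have key : ∀ s : Finset ℤ, ∃ δ : ℝ, 0 < δ ∧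
      ∀ x y : ℤ → A, dist x y ≤ δ → ∀ j ∈ s, x j = y j := by
    intro s
    induction s using Finset.induction_on with
    | empty => exact ⟨1, one_pos, by simp⟩
    | insert i s _ ih =>
      obtain ⟨δ, hδ, h⟩ := ih
      have hp : (0 : ℝ) < 2⁻¹ ^ Encodable.encode i := by positivity
      refine ⟨min δ (min (2⁻¹ ^ Encodable.encode i) r / 2),
        lt_min hδ (half_pos (lt_min hp hr)), fun x y hxy j hj => ?_⟩
      rcases Finset.mem_insert.1 hj with rfl | hj
      · have h1 : dist x y < min (2⁻¹ ^ Encodable.encode j) r :=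
          (hxy.trans (min_le_right _ _)).trans_lt (half_lt_self (lt_min hp hr))
        have h2 := PiCountable.dist_le_dist_pi_of_dist_lt (h1.trans_le (min_le_left _ _))
        exact hsep _ _ (h2.trans_lt (h1.trans_le (min_le_right _ _)))
      · exact h x y (hxy.trans (min_le_left _ _)) j hj
  obtain ⟨δ, hδ, h⟩ := key (Finset.Icc (-P) P)
  exact ⟨δ, hδ, fun x y hxy j hj => h x y hxy j (Finset.mem_Icc.2 (abs_le.1 hj))⟩

/-- Sequences that agree on a sufficiently large central window are close. -/
lemma exists_dist_le_of_agree (A : Type*) [MetricSpace A] {ε : ℝ} (hε : 0 < ε) :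
    ∃ P : ℤ, 0 ≤ P ∧ ∀ x y : ℤ → A, (∀ j : ℤ, |j| ≤ P → x j = y j) → dist x y ≤ ε := by
  have hsum : Summable fun i : ℤ => (2⁻¹ : ℝ) ^ Encodable.encode i := by
    simpa [one_div] using summable_geometric_two_encode (ι := ℤ)
  -- The tail of the geometric series bounds the distance of sequences agreeing on `s`.
  obtain ⟨s, hs⟩ := ((tendsto_order.1 (tendsto_tsum_compl_atTop_zero
    (fun i : ℤ => (2⁻¹ : ℝ) ^ Encodable.encode i))).2 ε hε).exists
  obtain ⟨P, hP0, hP⟩ : ∃ P : ℤ, 0 ≤ P ∧ ∀ j ∈ s, |j| ≤ P :=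
    ⟨∑ j ∈ s, |j|, Finset.sum_nonneg fun _ _ => abs_nonneg _, fun j hj =>
      Finset.single_le_sum (f := fun j : ℤ => |j|) (fun _ _ => abs_nonneg _) hj⟩
  refine ⟨P, hP0, fun x y h => ?_⟩
  have hsupp : ∀ i : ℤ, min ((2⁻¹ : ℝ) ^ Encodable.encode i) (dist (x i) (y i)) ≤
      ({i | i ∉ s} : Set ℤ).indicator (fun i : ℤ => (2⁻¹ : ℝ) ^ Encodable.encode i) i := by
    intro i
    by_cases hi : i ∈ s
    · have : x i = y i := h i (hP i hi)
      simp [hi, this]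
    · simp [hi]
  calc dist x y = ∑' i, min ((2⁻¹ : ℝ) ^ Encodable.encode i) (dist (x i) (y i)) := rfl
    _ ≤ ∑' i, ({i | i ∉ s} : Set ℤ).indicator
          (fun i : ℤ => (2⁻¹ : ℝ) ^ Encodable.encode i) i :=
        (PiCountable.dist_summable x y).tsum_le_tsum hsupp (hsum.indicator _)
    _ = ∑' i : {i // i ∉ s}, (2⁻¹ : ℝ) ^ Encodable.encode (i : ℤ) :=
        (tsum_subtype ({i | i ∉ s} : Set ℤ) _).symm
    _ ≤ ε := hs.le

/-! ### Overlapping windows and invariance -/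

/-- If each window `c n` and its successor `c (n + 1)` overlap compatibly, the windows are
the central pieces of the single sequence `k ↦ c k 0`. -/
lemma window_eq_center {B : Type*} {P : ℤ} (c : ℤ → ℤ → B)
    (h : ∀ n j : ℤ, -P ≤ j → j < P → c n (j + 1) = c (n + 1) j) (n j : ℤ) (hj : |j| ≤ P) :
    c n j = c (n + j) 0 := by
  obtain ⟨h1, h2⟩ := abs_le.1 hj
  have hpos : ∀ k : ℕ, ∀ n : ℤ, (k : ℤ) ≤ P → c n k = c (n + k) 0 := by
    intro k
    induction k with
    | zero => intro n _; simp
    | succ k ih =>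
      intro n hk
      push_cast at hk ⊢
      rw [h n k (by omega) (by omega), ih (n + 1) (by omega)]
      congr 1; ring
  have hneg : ∀ k : ℕ, ∀ n : ℤ, (k : ℤ) ≤ P → c n (-k) = c (n - k) 0 := by
    intro k
    induction k with
    | zero => intro n _; simp
    | succ k ih =>
      intro n hk
      push_cast at hk ⊢
      have := h (n - 1) (-(k + 1)) (by omega) (by omega)
      rw [sub_add_cancel] at this
      rw [← this, show (-((k : ℤ) + 1) + 1) = -k by ring, ih (n - 1) (by omega)]
      congr 1; ring
  obtain ⟨k, rfl | rfl⟩ := j.eq_nat_or_neg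
  · exact hpos k n h2
  · simpa [sub_eq_add_neg] using hneg k n (by omega)

/-- A subshift is invariant under all integer powers of the shift. -/
lemma translate_mem {A : Type*} [MetricSpace A] {S : Set (ℤ → A)} (hS : IsSubshift S)
    {x : ℤ → A} (hx : x ∈ S) (n : ℤ) : (fun i => x (i + n)) ∈ S := by
  induction n using Int.induction_on with
  | zero => simpa using hx
  | succ n ih =>
    rw [← hS.2]
    refine ⟨_, ih, ?_⟩
    funext i
    simp only [fullShift]
    congr 1; ring
  | pred n ih =>
    rw [← hS.2] at ih
    obtain ⟨y, hy, hxy⟩ := ih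
    convert hy using 1
    funext i
    have := congrFun hxy (i - 1)
    simp only [fullShift, sub_add_cancel] at this
    rw [this]
    congr 1; ring

/-! ### The two implications -/

/-- Given a conjugacy `h` to a vertex shift, a sufficiently fine pseudo-orbit `x` is
traced by the preimage under `h` of the sequence of central symbols of the `h (x n)`. -/
lemma shadowing_of_SFT {A : Type*} [Fintype A] [MetricSpace A] {S : Set (ℤ → A)}
    (hS : IsSFT S) : ShadowingOn (fullShift A) S := by
  obtain ⟨hsub, B, _, mB, Adj, h, hconj⟩ := hS
  have : CompactSpace S := isCompact_iff_compactSpace.1 hsub.1.isCompact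
  have : CompactSpace (vertexShift Adj) := h.compactSpace
  have huc : UniformContinuous h :=
    CompactSpace.uniformContinuous_of_continuous h.continuous
  have huc' : UniformContinuous h.symm :=
    CompactSpace.uniformContinuous_of_continuous h.symm.continuous
  have hmem : ∀ x : S, fullShift A x ∈ S := fun x => hsub.2.subset ⟨x, x.2, rfl⟩
  intro ε hε
  obtain ⟨ε₁, hε₁, h₁⟩ := Metric.uniformContinuous_iff.1 huc' ε hε
  obtain ⟨P, hP, h₂⟩ := exists_dist_le_of_agree B (half_pos hε₁)
  obtain ⟨ε₂, hε₂, h₃⟩ := exists_agree_of_dist_le B P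
  obtain ⟨δ, hδ, h₄⟩ := Metric.uniformContinuous_iff.1 huc ε₂ hε₂
  refine ⟨δ / 2, half_pos hδ, fun x hx hpo => ?_⟩
  let c : ℤ → ℤ → B := fun n => (h ⟨x n, hx n⟩ : ℤ → B)
  have hc : ∀ n j : ℤ, |j| ≤ P → c n (j + 1) = c (n + 1) j := by
    intro n j hj
    have e := hconj ⟨x n, hx n⟩ ⟨fullShift A (x n), hmem ⟨x n, hx n⟩⟩ rfl
    have hd : dist (h ⟨fullShift A (x n), hmem ⟨x n, hx n⟩⟩) (h ⟨x (n + 1), hx (n + 1)⟩) < ε₂ :=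
      h₄ ((hpo n).trans_lt (half_lt_self hδ))
    have := h₃ _ _ (le_of_lt hd) j hj
    rw [e] at this
    exact this
  let b : ℤ → B := fun n => c n 0
  have hb : b ∈ vertexShift Adj := by
    intro n
    have hadj : Adj (c n 0) (c n (0 + 1)) := (h ⟨x n, hx n⟩).2 0
    rw [hc n 0 (by simpa using hP)] at hadj
    exact hadj
  have hbn : ∀ n : ℤ, (fun j => b (j + n)) ∈ vertexShift Adj := by
    intro n j
    have := hb (j + n)
    rwa [add_right_comm] at this
  let z : ℤ → S := fun n => h.symm ⟨_, hbn n⟩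
  refine ⟨fun n => z n, fun n => (z n).2, fun n => ?_, fun n => ?_⟩
  · have e := hconj (z n) ⟨fullShift A (z n), hmem (z n)⟩ rfl
    have : z (n + 1) = ⟨fullShift A (z n), hmem (z n)⟩ := by
      apply h.injective
      apply Subtype.ext
      rw [e]
      funext j
      simp only [z, Homeomorph.apply_symm_apply, fullShift]
      congr 1; ring
    exact congrArg Subtype.val this
  · have hag : ∀ j : ℤ, |j| ≤ P → b (j + n) = (h ⟨x n, hx n⟩ : ℤ → B) j := by
      intro j hj
      rw [add_comm]
      exact (window_eq_center c
        (fun n j h1 h2 => hc n j (abs_le.2 ⟨h1, h2.le⟩)) n j hj).symm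
    have hd : dist (⟨_, hbn n⟩ : vertexShift Adj) (h ⟨x n, hx n⟩) < ε₁ :=
      (h₂ _ _ hag).trans_lt (half_lt_self hε₁)
    have := h₁ hd
    rw [h.symm_apply_apply] at this
    exact le_of_lt this

/-- The higher block presentation: shadowing forces every sequence of overlapping admissible
words of a suitable length to come from a point of the subshift, so recoding by such words
is a conjugacy to a vertex shift. -/
lemma SFT_of_shadowing {A : Type*} [Fintype A] [MetricSpace A] {S : Set (ℤ → A)}
    (hS : IsSubshift S) (hsh : ShadowingOn (fullShift A) S) : IsSFT S := by
  classical
  obtain ⟨ε, hε, h₁⟩ := exists_agree_of_dist_le A 0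
  obtain ⟨δ, hδ, h₂⟩ := hsh ε hε
  obtain ⟨N, hN, h₃⟩ := exists_dist_le_of_agree A hδ
  -- Windows have radius `N + 1`, one more than `N`, so that the shift of a window still
  -- covers `[-N, N]`.
  let I := {j : ℤ // j ∈ Finset.Icc (-(N + 1)) (N + 1)}
  let W : Set (I → A) := (fun x : ℤ → A => fun j : I => x j) '' S
  have : Finite I := inferInstanceAs (Finite {j : ℤ // j ∈ Finset.Icc (-(N + 1)) (N + 1)})
  have : Fintype W := Fintype.ofFinite W
  -- The alphabet must live in `Type`, whatever the universe of `A`.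
  obtain ⟨B, _, mB, ⟨e⟩⟩ : ∃ (B : Type) (_ : Fintype B) (_ : MetricSpace B),
      Nonempty (W ≃ B) :=
    ⟨Fin (Fintype.card W), inferInstance,
      MetricSpace.induced (fun i => (i : ℕ)) Fin.val_injective inferInstance,
      ⟨Fintype.equivFin W⟩⟩
  let Adj : B → B → Prop := fun v w =>
    ∀ i j : I, (i : ℤ) = j + 1 → (e.symm v : I → A) i = (e.symm w : I → A) j
  let zero : I := ⟨0, Finset.mem_Icc.2 (by omega)⟩
  let block : S → ℤ → W := fun x n =>
    ⟨fun j => (x : ℤ → A) (j + n), ⟨_, translate_mem hS x.2 n, rfl⟩⟩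
  have hblock : ∀ x : S, (fun n => e (block x n)) ∈ vertexShift Adj := by
    intro x n i j hij
    simp only [Equiv.symm_apply_apply, block, hij]
    ring_nf
  have hglue : ∀ b ∈ vertexShift Adj, ∃ hx : (fun n => (e.symm (b n) : I → A) zero) ∈ S,
      ∀ n, e (block ⟨_, hx⟩ n) = b n := by
    intro b hb
    choose y hyS hy using fun n => (e.symm (b n)).2
    have hy' : ∀ n (j : I), y n j = (e.symm (b n) : I → A) j := fun n j => congrFun (hy n) j
    have hc : ∀ n j : ℤ, -(N + 1) ≤ j → j < N + 1 → y n (j + 1) = y (n + 1) j := by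
      intro n j hj1 hj2
      have := hb n ⟨j + 1, Finset.mem_Icc.2 (by omega)⟩ ⟨j, Finset.mem_Icc.2 (by omega)⟩ rfl
      rwa [← hy', ← hy'] at this
    obtain ⟨z, hzS, hz, hzy⟩ := h₂ y hyS fun n => h₃ _ _ fun j hj => by
      obtain ⟨hj1, hj2⟩ := abs_le.1 hj
      exact hc n j (by omega) (by omega)
    have hz0 : ∀ n : ℤ, z 0 n = y n 0 := by
      intro n
      have h0 := window_eq_center (P := |n|) z
        (fun n j _ _ => by rw [hz n]; rfl) 0 n le_rfl
      rw [h0, zero_add]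
      exact h₁ _ _ (hzy n) 0 (by simp)
    have hx : (fun n => (e.symm (b n) : I → A) zero) = z 0 := by
      funext n
      rw [hz0 n, ← hy' n zero]
    refine ⟨hx ▸ hzS 0, fun n => ?_⟩
    rw [← Equiv.eq_symm_apply]
    apply Subtype.ext
    funext j
    change (e.symm (b (j + n)) : I → A) zero = _
    rw [← hy', ← hy', add_comm]
    exact (window_eq_center y hc n j (abs_le.2 (Finset.mem_Icc.1 j.2))).symm
  refine ⟨hS, _, inferInstance, mB, Adj, ?_⟩
  refine ⟨{ toFun := fun x => ⟨_, hblock x⟩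
            invFun := fun b => ⟨_, (hglue b b.2).1⟩
            left_inv := ?_
            right_inv := ?_
            continuous_toFun := ?_
            continuous_invFun := ?_ }, ?_⟩
  · intro x
    apply Subtype.ext
    funext n
    simp [block, zero]
  · intro b
    apply Subtype.ext
    funext n
    exact (hglue b b.2).2 n
  · refine Continuous.subtype_mk (continuous_pi fun n => ?_) _
    refine continuous_of_discreteTopology.comp (Continuous.subtype_mk ?_ _)
    exact continuous_pi fun j => (continuous_apply _).comp continuous_subtype_val
  · refine Continuous.subtype_mk (continuous_pi fun n => ?_) _
    exact (continuous_of_discreteTopology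
      (f := fun v : B => (e.symm v : I → A) zero)).comp
      ((continuous_apply n).comp continuous_subtype_val)
  · intro x y hxy
    funext n
    change e (block y n) = e (block x (n + 1))
    congr 1
    apply Subtype.ext
    funext j
    simp only [block, hxy, fullShift]
    ring_nf

/-- A subshift over a finite alphabet is a shift of finite type if
and only if the shift map restricted to it has the shadowing property. -/
theorem SFT_iff_shadowing
    {A : Type*} [Fintype A] [MetricSpace A]
    (S : Set (ℤ → A)) (hS : IsSubshift S) :
    IsSFT S ↔ ShadowingOn (fullShift A) S := by
  exact ⟨shadowing_of_SFT, SFT_of_shadowing hS⟩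
end
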